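/- Let Δ>0, let φ and P_A satisfy hypothesis (H2), let P_0 be a discrete distribution with finite support as described, let γ>0, and for ρ∈(0,1) set α(ρ) := γρ|ln ρ| and I(ρ,α(ρ),τ) := inf_{q∈[0,E[X²]]} sup_{r≥0} { (1/α(ρ))·I_{P_{0,ρ}}((α(ρ)/ρ)(r+τ)) + I_{P_out}(q,E[X²]) − r(E[X²]−q)/2 }. Then for every τ∈[0, 2/(γv_K²)), I(ρ,α(ρ),τ) converges as ρ→0⁺ and lim_{ρ→0⁺} I(ρ,α(ρ),τ) = min_{1≤k≤K+1} { I_{P_out}(E[X²·1{|X|≥v_k}],E[X²]) + ℙ(|X|≥v_k)/γ + τ·E[X²·1{|X|<v_k}]/2 }. -/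

import Mathlib

open MeasureTheory ProbabilityTheory Real

noncomputable section

namespace GLM

/-- Standard Gaussian measure on ℝ. -/
def stdG : Measure ℝ := gaussianReal 0 1

/-- `n` i.i.d. copies of a measure on ℝ. -/
def iid (n : ℕ) (μ : Measure ℝ) : Measure (Fin n → ℝ) := Measure.pi fun _ => μ

/-- The sparse prior `(1-ρ)δ₀ + ρ P₀`. -/
def sparsePrior (ρ : ℝ) (P0 : Measure ℝ) : Measure ℝ :=
  ENNReal.ofReal (1 - ρ) • Measure.dirac 0 + ENNReal.ofReal ρ • P0

/-- Second moment of a real measure. -/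
def secondMoment (P : Measure ℝ) : ℝ := ∫ x, x ^ 2 ∂P

/-- The transition density `P_out(y|x)`. -/
def Pout (Δ : ℝ) {kA : ℕ} (PA : Measure (Fin kA → ℝ)) (φ : ℝ → (Fin kA → ℝ) → ℝ)
    (y x : ℝ) : ℝ :=
  (Real.sqrt (2 * π * Δ))⁻¹ * ∫ a, Real.exp (-(y - φ x a) ^ 2 / (2 * Δ)) ∂PA

/-- Scalar channel mutual information `I_{P_out}(q, ρ')`. -/
def IPout (Δ : ℝ) {kA : ℕ} (PA : Measure (Fin kA → ℝ)) (φ : ℝ → (Fin kA → ℝ) → ℝ)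
    (q ρ' : ℝ) : ℝ :=
  (∫ v, ∫ a, ∫ z,
      Real.log (Pout Δ PA φ (φ (Real.sqrt ρ' * v) a + Real.sqrt Δ * z) (Real.sqrt ρ' * v))
      ∂stdG ∂PA ∂stdG)
  - ∫ v, ∫ w, ∫ a, ∫ z,
      Real.log (∫ w', Pout Δ PA φ
        (φ (Real.sqrt q * v + Real.sqrt (ρ' - q) * w) a + Real.sqrt Δ * z)
        (Real.sqrt q * v + Real.sqrt (ρ' - q) * w') ∂stdG) ∂stdG ∂PA ∂stdG ∂stdG

/-- `ψ_P(r)` for the scalar additive Gaussian channel with prior `P`. -/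
def psiP (P : Measure ℝ) (r : ℝ) : ℝ :=
  ∫ xs, ∫ z, Real.log (∫ x, Real.exp (r * xs * x + Real.sqrt r * z * x - r * x ^ 2 / 2) ∂P)
    ∂stdG ∂P

/-- `I_{P_{0,n}}(r)`. -/
def IP0 (ρ : ℝ) (P0 : Measure ℝ) (r : ℝ) : ℝ :=
  r * ρ * secondMoment P0 / 2 - psiP (sparsePrior ρ P0) r

/-- Replica symmetric potential. -/
def iRS (Δ : ℝ) {kA : ℕ} (PA : Measure (Fin kA → ℝ)) (φ : ℝ → (Fin kA → ℝ) → ℝ)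
    (P0 : Measure ℝ) (α ρ q r : ℝ) : ℝ :=
  (1 / α) * IP0 ρ P0 (α / ρ * r) + IPout Δ PA φ q (secondMoment P0)
    - r * (secondMoment P0 - q) / 2

/-- density of the observations given signal and matrix. -/
def pCond (Δ : ℝ) {kA : ℕ} (PA : Measure (Fin kA → ℝ)) (φ : ℝ → (Fin kA → ℝ) → ℝ)
    (n m : ℕ) (kn : ℝ) (Φ : Fin m → Fin n → ℝ) (x : Fin n → ℝ) (y : Fin m → ℝ) : ℝ :=
  ∏ μ, Pout Δ PA φ (y μ) ((∑ i, Φ μ i * x i) / Real.sqrt kn)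

/-- marginal density of the observations given the matrix. -/
def pMarg (Δ : ℝ) {kA : ℕ} (PA : Measure (Fin kA → ℝ)) (φ : ℝ → (Fin kA → ℝ) → ℝ)
    (n m : ℕ) (P : Measure ℝ) (kn : ℝ) (Φ : Fin m → Fin n → ℝ) (y : Fin m → ℝ) : ℝ :=
  ∫ x, pCond Δ PA φ n m kn Φ x y ∂(iid n P)

/-- The observations `Y`. -/
def Yobs (Δ : ℝ) {kA : ℕ} (φ : ℝ → (Fin kA → ℝ) → ℝ) (n m : ℕ) (kn : ℝ)
    (Φ : Fin m → Fin n → ℝ) (x : Fin n → ℝ) (a : Fin m → Fin kA → ℝ) (z : Fin m → ℝ) :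
    Fin m → ℝ :=
  fun μ => φ ((∑ i, Φ μ i * x i) / Real.sqrt kn) (a μ) + Real.sqrt Δ * z μ

/-- The conditional mutual information `I(X*;Y|Φ)`. -/
def MI (Δ : ℝ) {kA : ℕ} (PA : Measure (Fin kA → ℝ)) (φ : ℝ → (Fin kA → ℝ) → ℝ)
    (P0 : Measure ℝ) (ρ : ℝ) (n m : ℕ) : ℝ :=
  ∫ x, ∫ Φ, ∫ a, ∫ z,
    Real.log (pCond Δ PA φ n m (n * ρ) Φ x (Yobs Δ φ n m (n * ρ) Φ x a z)
      / pMarg Δ PA φ n m (sparsePrior ρ P0) (n * ρ) Φ (Yobs Δ φ n m (n * ρ) Φ x a z))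
    ∂(iid m stdG) ∂(Measure.pi fun _ : Fin m => PA) ∂(Measure.pi fun _ : Fin m => iid n stdG)
    ∂(iid n (sparsePrior ρ P0))

/-- The truncated second moment E[X^2 * 1(|X| < v)]. -/
def headSM (P : Measure ℝ) (v : ℝ) : ℝ := ∫ x, if |x| < v then x ^ 2 else 0 ∂P

/-- The truncated second moment E[X^2 * 1(|X| >= v)]. -/
def truncSMge (P : Measure ℝ) (v : ℝ) : ℝ := ∫ x, if v ≤ |x| then x ^ 2 else 0 ∂P

/-- The tail probability P(|X| >= v). -/
def tailProb (P : Measure ℝ) (v : ℝ) : ℝ := (P {x | v ≤ |x|}).toReal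

/-- Extended replica-symmetric potential with side information parameter τ. -/
def iRSside (Δ : ℝ) {kA : ℕ} (PA : Measure (Fin kA → ℝ)) (φ : ℝ → (Fin kA → ℝ) → ℝ)
    (P0 : Measure ℝ) (α ρ q r τ : ℝ) : ℝ :=
  (1 / α) * IP0 ρ P0 (α / ρ * (r + τ)) + IPout Δ PA φ q (secondMoment P0)
    - r * (secondMoment P0 - q) / 2

instance : IsProbabilityMeasure stdG := inferInstanceAs (IsProbabilityMeasure (gaussianReal 0 1))

lemma integrable_stdG_of_bound {f : ℝ → ℝ} (hf : Measurable f) {C : ℝ} (hC : ∀ x, |f x| ≤ C) :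
    Integrable f stdG :=
  Integrable.of_bound hf.aestronglyMeasurable C (ae_of_all _ hC)

lemma integrable_id_stdG : Integrable (fun x : ℝ => x) stdG :=
  (memLp_id_gaussianReal (μ := 0) (v := 1) 1).integrable (by simp)

lemma integrable_sq_stdG : Integrable (fun x : ℝ => x ^ 2) stdG :=
  (memLp_id_gaussianReal (μ := 0) (v := 1) 2).integrable_sq

lemma integral_sq_stdG : ∫ x, x ^ 2 ∂stdG = 1 := by
  have h := variance_fun_id_gaussianReal (μ := 0) (v := 1)
  rw [variance_eq_integral (by fun_prop)] at h
  simpa [stdG] using h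

lemma integral_id_stdG : ∫ x, x ∂stdG = 0 := integral_id_gaussianReal

lemma map_const_mul_stdG (a : ℝ) :
    stdG.map (fun v => a * v) = gaussianReal 0 (Real.toNNReal (a ^ 2)) := by
  unfold stdG
  rw [gaussianReal_map_const_mul]
  congr 1
  · simp
  · rw [mul_one]
    ext
    simp [sq_nonneg]

/-- A linear combination of two independent standard Gaussians is Gaussian. -/
lemma integral_stdG_add {g : ℝ → ℝ} (hg : Measurable g) {C : ℝ} (hC : ∀ x, |g x| ≤ C) (a b : ℝ) :
    ∫ v, ∫ w, g (a * v + b * w) ∂stdG ∂stdG = ∫ v, g (√(a ^ 2 + b ^ 2) * v) ∂stdG := by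
  have hm : Measurable fun p : ℝ × ℝ => g (a * p.1 + b * p.2) := by fun_prop
  have hint : Integrable (fun p : ℝ × ℝ => g (a * p.1 + b * p.2)) (stdG.prod stdG) :=
    Integrable.of_bound hm.aestronglyMeasurable C (ae_of_all _ fun _ => hC _)
  have key : (stdG.prod stdG).map (fun p : ℝ × ℝ => a * p.1 + b * p.2)
      = stdG.map (fun v => √(a ^ 2 + b ^ 2) * v) := by
    have h1 : (stdG.prod stdG).map (fun p : ℝ × ℝ => a * p.1 + b * p.2)
        = (((stdG.map (fun v => a * v)).prod (stdG.map (fun v => b * v))).map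
          fun p : ℝ × ℝ => p.1 + p.2) := by
      rw [Measure.map_prod_map _ _ (by fun_prop) (by fun_prop),
        Measure.map_map (by fun_prop) (by fun_prop)]
      rfl
    have h2 := gaussianReal_conv_gaussianReal (m₁ := 0) (m₂ := 0) (v₁ := Real.toNNReal (a ^ 2))
      (v₂ := Real.toNNReal (b ^ 2))
    rw [h1, map_const_mul_stdG, map_const_mul_stdG, map_const_mul_stdG]
    rw [Measure.conv] at h2
    rw [h2, Real.sq_sqrt (by positivity), Real.toNNReal_add (sq_nonneg _) (sq_nonneg _), add_zero]
  rw [← integral_prod (fun p : ℝ × ℝ => g (a * p.1 + b * p.2)) hint,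
    ← integral_map (φ := fun p : ℝ × ℝ => a * p.1 + b * p.2) (f := g) (by fun_prop)
      hg.aestronglyMeasurable, key,
    integral_map (by fun_prop) hg.aestronglyMeasurable]

/-- Gaussian integration by parts. -/
lemma integral_id_mul_stdG {g g' : ℝ → ℝ} (hg : ∀ x, HasDerivAt g (g' x) x) {C : ℝ}
    (hC : ∀ x, |g x| ≤ C) (hC' : ∀ x, |g' x| ≤ C) :
    ∫ x, x * g x ∂stdG = ∫ x, g' x ∂stdG := by
  have hgm : Measurable g := (continuous_iff_continuousAt.2 fun x => (hg x).continuousAt).measurable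
  have hg'm : Measurable g' := by
    have : g' = deriv g := funext fun x => ((hg x).deriv).symm
    rw [this]; exact measurable_deriv g
  have e : ∀ f : ℝ → ℝ, ∫ x, f x ∂stdG = ∫ x, gaussianPDFReal 0 1 x * f x := fun f => by
    unfold stdG
    rw [integral_gaussianReal_eq_integral_smul (by simp)]
    simp
  rw [e, e]
  have hd : ∀ x, HasDerivAt (gaussianPDFReal 0 1) (-(x * gaussianPDFReal 0 1 x)) x := by
    intro x
    rw [gaussianPDFReal_def]
    have h1 : HasDerivAt (fun x : ℝ => -(x - 0) ^ 2 / (2 * ((1 : NNReal) : ℝ))) (-x) x := by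
      have := ((hasDerivAt_id x).pow 2).neg.div_const 2
      have e : -x = -(2 * x) / 2 := by ring
      simp at this ⊢
      rw [e]
      exact this
    refine (h1.exp.const_mul (√(2 * π * ((1 : NNReal) : ℝ)))⁻¹).congr_deriv ?_
    ring
  have hi0 : Integrable (gaussianPDFReal 0 1) := integrable_gaussianPDFReal 0 1
  have hi1 : Integrable (fun x => x * gaussianPDFReal 0 1 x) := by
    have := (integrable_mul_exp_neg_mul_sq (b := 1 / 2) (by norm_num)).const_mul (√(2 * π))⁻¹
    refine this.congr (ae_of_all _ fun x => ?_)
    simp only [gaussianPDFReal, NNReal.coe_one, mul_one, sub_zero]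
    rw [show -(1 / 2) * x ^ 2 = -x ^ 2 / 2 by ring]
    ring
  have h := integral_mul_deriv_eq_deriv_mul_of_integrable (u := g) (u' := g')
    (v := gaussianPDFReal 0 1) (v' := fun x => -(x * gaussianPDFReal 0 1 x))
    (fun x _ => hg x) (fun x _ => hd x)
    (hi1.neg.bdd_mul hgm.aestronglyMeasurable (ae_of_all _ hC))
    (hi0.bdd_mul hg'm.aestronglyMeasurable (ae_of_all _ hC'))
    (hi0.bdd_mul hgm.aestronglyMeasurable (ae_of_all _ hC))
  have h2 : ∫ x, gaussianPDFReal 0 1 x * (x * g x)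
      = - ∫ x, g x * -(x * gaussianPDFReal 0 1 x) := by
    rw [← integral_neg]; congr 1; ext x; ring
  rw [h2, h, neg_neg]
  congr 1; ext x; ring

/-- Cauchy-Schwarz in the form of Jensen's inequality for `(a, u) ↦ a ^ 2 / u`. -/
lemma sq_integral_div_le {Ω : Type*} [MeasurableSpace Ω] {μ : Measure Ω} {a u : Ω → ℝ}
    (ha : Integrable a μ) (hu : Integrable u μ) (hq : Integrable (fun x => a x ^ 2 / u x) μ)
    (hpos : ∀ x, 0 < u x) (hpos' : 0 < ∫ x, u x ∂μ) :
    (∫ x, a x ∂μ) ^ 2 / (∫ x, u x ∂μ) ≤ ∫ x, a x ^ 2 / u x ∂μ := by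
  set l := (∫ x, a x ∂μ) / ∫ x, u x ∂μ with hl
  have h1 : ∫ x, (2 * l * a x - l ^ 2 * u x) ∂μ ≤ ∫ x, a x ^ 2 / u x ∂μ := by
    refine integral_mono ((ha.const_mul _).sub (hu.const_mul _)) hq fun x => ?_
    simp only
    rw [le_div_iff₀ (hpos x)]
    nlinarith [sq_nonneg (a x - l * u x)]
  rw [integral_sub (ha.const_mul _) (hu.const_mul _), integral_const_mul, integral_const_mul] at h1
  refine le_trans (le_of_eq ?_) h1
  rw [hl]; field_simp; ring

/-- The heat semigroup on ℝ. -/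
def heat (s : ℝ) (f : ℝ → ℝ) (x : ℝ) : ℝ := ∫ w, f (x + √s * w) ∂stdG

lemma measurable_heat (s : ℝ) {f : ℝ → ℝ} (hf : Measurable f) : Measurable (heat s f) := by
  have h : StronglyMeasurable (fun p : ℝ × ℝ => f (p.1 + √s * p.2)) :=
    (show Measurable (fun p : ℝ × ℝ => f (p.1 + √s * p.2)) by fun_prop).stronglyMeasurable
  exact h.integral_prod_right.measurable

lemma abs_integral_stdG_le {f : ℝ → ℝ} {C : ℝ} (hC : ∀ x, |f x| ≤ C) : |∫ x, f x ∂stdG| ≤ C := by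
  have := norm_integral_le_of_norm_le_const (μ := stdG) (f := f) (C := C) (ae_of_all _ hC)
  simpa using this

lemma abs_heat_le (s : ℝ) {f : ℝ → ℝ} {C : ℝ} (hC : ∀ x, |f x| ≤ C) (x : ℝ) :
    |heat s f x| ≤ C :=
  abs_integral_stdG_le fun _ => hC _

lemma le_heat (s : ℝ) {f : ℝ → ℝ} (hf : Measurable f) {c C : ℝ} (hC : ∀ x, |f x| ≤ C)
    (hc : ∀ x, c ≤ f x) (x : ℝ) : c ≤ heat s f x := by
  have h : ∫ _, c ∂stdG ≤ heat s f x :=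
    integral_mono (integrable_const _) (integrable_stdG_of_bound (by fun_prop) fun _ => hC _)
      fun _ => hc _
  simpa using h

lemma heat_mono (s : ℝ) {f g : ℝ → ℝ} (hf : Measurable f) (hg : Measurable g) {C D : ℝ}
    (hC : ∀ x, |f x| ≤ C) (hD : ∀ x, |g x| ≤ D) (hfg : ∀ x, f x ≤ g x) (x : ℝ) :
    heat s f x ≤ heat s g x :=
  integral_mono (integrable_stdG_of_bound (by fun_prop) fun _ => hC _)
    (integrable_stdG_of_bound (by fun_prop) fun _ => hD _) fun _ => hfg _

lemma heat_heat {s t : ℝ} (hs : 0 ≤ s) (ht : 0 ≤ t) {f : ℝ → ℝ} (hf : Measurable f) {C : ℝ}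
    (hC : ∀ x, |f x| ≤ C) (x : ℝ) : heat s (heat t f) x = heat (s + t) f x := by
  have h := integral_stdG_add (g := fun y => f (x + y)) (by fun_prop) (fun y => hC _) (√s) (√t)
  rw [Real.sq_sqrt hs, Real.sq_sqrt ht] at h
  simpa only [heat, add_assoc] using h

lemma measurable_of_hasDerivAt {f f' : ℝ → ℝ} (h : ∀ x, HasDerivAt f (f' x) x) :
    Measurable f ∧ Measurable f' := by
  refine ⟨(continuous_iff_continuousAt.2 fun x => (h x).continuousAt).measurable, ?_⟩
  have : f' = deriv f := funext fun x => ((h x).deriv).symm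
  rw [this]; exact measurable_deriv f

lemma hasDerivAt_heat (s : ℝ) {f f' : ℝ → ℝ} (h : ∀ x, HasDerivAt f (f' x) x) {C D : ℝ}
    (hC : ∀ x, |f x| ≤ C) (hD : ∀ x, |f' x| ≤ D) (x : ℝ) :
    HasDerivAt (heat s f) (heat s f' x) x := by
  obtain ⟨hm, hm'⟩ := measurable_of_hasDerivAt h
  refine (hasDerivAt_integral_of_dominated_loc_of_deriv_le (μ := stdG) (s := Set.univ)
    (F := fun x w => f (x + √s * w)) (F' := fun x w => f' (x + √s * w)) (bound := fun _ => D)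
    Filter.univ_mem (Filter.Eventually.of_forall fun y => ?_)
    (integrable_stdG_of_bound (by fun_prop) fun _ => hC _) ?_
    (ae_of_all _ fun w y _ => hD _) (integrable_const _) (ae_of_all _ fun w y _ => ?_)).2
  · exact (show Measurable fun w => f (y + √s * w) by fun_prop).aestronglyMeasurable
  · exact (show Measurable fun w => f' (x + √s * w) by fun_prop).aestronglyMeasurable
  · simpa using (h (y + √s * w)).comp_add_const y (√s * w)

/-- A positive function bounded away from zero with two bounded derivatives. -/
structure SmoothBdd (f f' f'' : ℝ → ℝ) (c C : ℝ) : Prop where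
  pos : 0 < c
  d1 : ∀ x, HasDerivAt f (f' x) x
  d2 : ∀ x, HasDerivAt f' (f'' x) x
  lb : ∀ x, c ≤ f x
  b0 : ∀ x, |f x| ≤ C
  b1 : ∀ x, |f' x| ≤ C
  b2 : ∀ x, |f'' x| ≤ C

namespace SmoothBdd

variable {f f' f'' : ℝ → ℝ} {c C : ℝ}

lemma meas (H : SmoothBdd f f' f'' c C) : Measurable f := (measurable_of_hasDerivAt H.d1).1

lemma meas' (H : SmoothBdd f f' f'' c C) : Measurable f' := (measurable_of_hasDerivAt H.d1).2

lemma meas'' (H : SmoothBdd f f' f'' c C) : Measurable f'' := (measurable_of_hasDerivAt H.d2).2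

lemma C_nonneg (H : SmoothBdd f f' f'' c C) : 0 ≤ C := (abs_nonneg _).trans (H.b0 0)

lemma heat (H : SmoothBdd f f' f'' c C) (s : ℝ) :
    SmoothBdd (heat s f) (heat s f') (heat s f'') c C where
  pos := H.pos
  d1 := hasDerivAt_heat s H.d1 H.b0 H.b1
  d2 := hasDerivAt_heat s H.d2 H.b1 H.b2
  lb := le_heat s H.meas H.b0 H.lb
  b0 := abs_heat_le s H.b0
  b1 := abs_heat_le s H.b1
  b2 := abs_heat_le s H.b2

lemma f_pos (H : SmoothBdd f f' f'' c C) (x : ℝ) : 0 < f x := H.pos.trans_le (H.lb x)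

lemma f_le (H : SmoothBdd f f' f'' c C) (x : ℝ) : f x ≤ C := (le_abs_self _).trans (H.b0 x)

lemma abs_log_le (H : SmoothBdd f f' f'' c C) (x : ℝ) : |log (f x)| ≤ |log c| + |log C| := by
  have h1 := log_le_log H.pos (H.lb x)
  have h2 := log_le_log (H.f_pos x) (H.f_le x)
  rw [abs_le]
  constructor
  · linarith [neg_abs_le (log c), abs_nonneg (log C)]
  · linarith [le_abs_self (log C), abs_nonneg (log c)]

lemma abs_fisher_le (H : SmoothBdd f f' f'' c C) (x : ℝ) : |f' x ^ 2 / f x| ≤ C ^ 2 / c := by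
  rw [abs_of_nonneg (div_nonneg (sq_nonneg _) (H.f_pos x).le)]
  have : f' x ^ 2 ≤ C ^ 2 := by
    rw [← sq_abs]
    exact pow_le_pow_left₀ (abs_nonneg _) (H.b1 x) 2
  exact div_le_div₀ (sq_nonneg _) this H.pos (H.lb x)

end SmoothBdd

variable {f f' f'' : ℝ → ℝ} {c C T : ℝ}

/-- The averaged Fisher information along the heat flow is monotone. -/
lemma heat_fisher_mono (H : SmoothBdd f f' f'' c C) {p q : ℝ} (hp : 0 ≤ p) (hpq : p ≤ q)
    (hq : q ≤ T) :
    heat p (fun x => heat (T - p) f' x ^ 2 / heat (T - p) f x) 0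
      ≤ heat q (fun x => heat (T - q) f' x ^ 2 / heat (T - q) f x) 0 := by
  have Hp := H.heat (T - p)
  have Hq := H.heat (T - q)
  set k := fun x => heat (T - q) f' x ^ 2 / heat (T - q) f x with hk
  have hkm : Measurable k := (Hq.meas'.pow_const 2).div Hq.meas
  have hkb : ∀ x, |k x| ≤ C ^ 2 / c := Hq.abs_fisher_le
  have e : heat q k 0 = heat p (heat (q - p) k) 0 := by
    rw [heat_heat hp (sub_nonneg.2 hpq) hkm hkb]
    congr 1; ring
  rw [e]
  refine heat_mono p ((Hp.meas'.pow_const 2).div Hp.meas) (measurable_heat _ hkm)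
    Hp.abs_fisher_le (abs_heat_le _ hkb) (fun x => ?_) 0
  have e0 : heat (T - p) f x = heat (q - p) (heat (T - q) f) x := by
    rw [heat_heat (sub_nonneg.2 hpq) (sub_nonneg.2 hq) H.meas H.b0]
    congr 1; ring
  have e1 : heat (T - p) f' x = heat (q - p) (heat (T - q) f') x := by
    rw [heat_heat (sub_nonneg.2 hpq) (sub_nonneg.2 hq) H.meas' H.b1]
    congr 1; ring
  change heat (T - p) f' x ^ 2 / heat (T - p) f x ≤ _
  rw [e0, e1]
  have m0 := Hq.meas
  have m1 := Hq.meas'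
  refine sq_integral_div_le (μ := stdG) (a := fun w => heat (T - q) f' (x + √(q - p) * w))
    (u := fun w => heat (T - q) f (x + √(q - p) * w))
    (integrable_stdG_of_bound (by fun_prop) fun _ => Hq.b1 _)
    (integrable_stdG_of_bound (by fun_prop) fun _ => Hq.b0 _)
    (integrable_stdG_of_bound (f := fun w => k (x + √(q - p) * w)) (by fun_prop) fun _ => hkb _)
    (fun _ => Hq.f_pos _) ?_
  exact H.pos.trans_le (le_heat (q - p) Hq.meas Hq.b0 Hq.lb x)

lemma hasDerivAt_sqrt_comb {q δ : ℝ} (hδ : 0 < δ) (hq : δ ≤ q) (hq' : δ ≤ T - q) (v w : ℝ) :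
    HasDerivAt (fun q => √q * v + √(T - q) * w) (v / (2 * √q) - w / (2 * √(T - q))) q := by
  have h1 := (hasDerivAt_id q).sqrt (by simp; linarith)
  have h2 := ((hasDerivAt_id q).const_sub T).sqrt (by simp; linarith)
  refine ((h1.mul_const v).add (h2.mul_const w)).congr_deriv ?_
  simp only [id]
  ring

lemma abs_div_sqrt_le {q δ : ℝ} (hδ : 0 < δ) (hq : δ ≤ q) (v : ℝ) :
    |v / (2 * √q)| ≤ |v| / (2 * √δ) := by
  rw [abs_div, abs_of_nonneg (show 0 ≤ 2 * √q by positivity)]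
  have := Real.sqrt_pos.2 hδ
  gcongr

/-- Derivative of the partially averaged density in the overlap. -/
lemma hasDerivAt_heat_overlap (H : SmoothBdd f f' f'' c C) {q δ : ℝ} (hδ : 0 < δ)
    (hq : δ < q) (hq' : δ < T - q) (v : ℝ) :
    HasDerivAt (fun q => heat (T - q) f (√q * v))
      (v / (2 * √q) * heat (T - q) f' (√q * v) - heat (T - q) f'' (√q * v) / 2) q := by
  have hm := H.meas
  have hm' := H.meas'
  have hm'' := H.meas''
  have hi : Integrable (fun w : ℝ => |w|) stdG := integrable_id_stdG.abs
  have hs : Set.Ioo δ (T - δ) ∈ nhds q := Ioo_mem_nhds hq (by linarith)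
  have key := (hasDerivAt_integral_of_dominated_loc_of_deriv_le (μ := stdG) (s := Set.Ioo δ (T - δ))
    (x₀ := q) (F := fun q w => f (√q * v + √(T - q) * w))
    (F' := fun q w => f' (√q * v + √(T - q) * w) * (v / (2 * √q) - w / (2 * √(T - q))))
    (bound := fun w => C * (|v| / (2 * √δ) + |w| / (2 * √δ)))
    hs (Filter.Eventually.of_forall fun y =>
      (show Measurable fun w => f (√y * v + √(T - y) * w) by fun_prop).aestronglyMeasurable)
    (integrable_stdG_of_bound (by fun_prop) fun _ => H.b0 _)
    (show Measurable fun w => f' (√q * v + √(T - q) * w) * (v / (2 * √q) - w / (2 * √(T - q))) by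
      fun_prop).aestronglyMeasurable
    (ae_of_all _ fun w y hy => ?_)
    (((integrable_const _).add (hi.div_const _)).const_mul _)
    (ae_of_all _ fun w y hy => ?_)).2
  · refine key.congr_deriv ?_
    have hpos : 0 < √(T - q) := Real.sqrt_pos.2 (by linarith)
    have hst := integral_id_mul_stdG (g := fun w => f' (√q * v + √(T - q) * w))
      (g' := fun w => √(T - q) * f'' (√q * v + √(T - q) * w)) (C := max C (√(T - q) * C))
      (fun w => by
        have h1 : HasDerivAt (fun w => √q * v + √(T - q) * w) (√(T - q)) w := by
          simpa using ((hasDerivAt_id w).const_mul (√(T - q))).const_add (√q * v)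
        have := (H.d2 (√q * v + √(T - q) * w)).comp w h1
        exact this.congr_deriv (mul_comm _ _))
      (fun w => (H.b1 _).trans (le_max_left _ _))
      (fun w => by
        rw [abs_mul, abs_of_pos hpos]
        exact (mul_le_mul_of_nonneg_left (H.b2 _) hpos.le).trans (le_max_right _ _))
    rw [integral_const_mul] at hst
    have i1 : Integrable (fun w => f' (√q * v + √(T - q) * w)) stdG :=
      integrable_stdG_of_bound (by fun_prop) fun _ => H.b1 _
    have i2 : Integrable (fun w => w * f' (√q * v + √(T - q) * w)) stdG :=
      (integrable_id_stdG.bdd_mul i1.aestronglyMeasurable (ae_of_all _ fun _ => H.b1 _)).congr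
        (ae_of_all _ fun w => mul_comm _ _)
    have e : ∀ w, f' (√q * v + √(T - q) * w) * (v / (2 * √q) - w / (2 * √(T - q)))
        = v / (2 * √q) * f' (√q * v + √(T - q) * w)
          - 1 / (2 * √(T - q)) * (w * f' (√q * v + √(T - q) * w)) := fun w => by ring
    simp only [e]
    rw [integral_sub (i1.const_mul _) (i2.const_mul _), integral_const_mul, integral_const_mul,
      hst]
    simp only [heat]
    field_simp
  · have h1 := abs_div_sqrt_le hδ hy.1.le v
    have h2 := abs_div_sqrt_le hδ (show δ ≤ T - y by linarith [hy.2]) w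
    rw [norm_mul, Real.norm_eq_abs, Real.norm_eq_abs]
    exact mul_le_mul (H.b1 _) ((abs_sub _ _).trans (add_le_add h1 h2)) (abs_nonneg _) H.C_nonneg
  · exact (H.d1 _).comp y
      (hasDerivAt_sqrt_comb hδ hy.1.le (show δ ≤ T - y by linarith [hy.2]) v w)

/-- `E[U log U]` for the averaged density `U` at overlap `q`. -/
def heatEnt (f : ℝ → ℝ) (T q : ℝ) : ℝ :=
  ∫ v, heat (T - q) f (√q * v) * log (heat (T - q) f (√q * v)) ∂stdG

lemma SmoothBdd.abs_mul_log_le (H : SmoothBdd f f' f'' c C) (x : ℝ) :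
    |f x * log (f x)| ≤ C * (|log c| + |log C|) := by
  rw [abs_mul]
  exact mul_le_mul (H.b0 _) (H.abs_log_le _) (abs_nonneg _) H.C_nonneg

lemma hasDerivAt_heatEnt (H : SmoothBdd f f' f'' c C) {q : ℝ} (hq : 0 < q) (hqT : q < T) :
    HasDerivAt (heatEnt f T)
      (heat q (fun x => heat (T - q) f' x ^ 2 / heat (T - q) f x) 0 / 2) q := by
  obtain ⟨δ, hδ, hδ'⟩ : ∃ δ, 0 < δ ∧ δ < min q (T - q) :=
    exists_between (lt_min hq (sub_pos.2 hqT))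
  rw [lt_min_iff] at hδ'
  obtain ⟨hδq, hδT⟩ := hδ'
  have hs : Set.Ioo δ (T - δ) ∈ nhds q := Ioo_mem_nhds hδq (by linarith)
  have hi : Integrable (fun w : ℝ => |w|) stdG := integrable_id_stdG.abs
  have Hq := H.heat (T - q)
  have m0 := Hq.meas
  have m1 := Hq.meas'
  have m2 := Hq.meas''
  set M := |log c| + |log C| + 1 with hM
  have hM0 : 0 ≤ M := by positivity
  have hC0 := H.C_nonneg
  have hlogb : ∀ q x, |log (heat (T - q) f x) + 1| ≤ M := fun q x => by
    refine (abs_add_le _ _).trans ?_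
    rw [abs_one]
    exact add_le_add ((H.heat (T - q)).abs_log_le x) le_rfl
  have key := (hasDerivAt_integral_of_dominated_loc_of_deriv_le (μ := stdG) (s := Set.Ioo δ (T - δ))
    (x₀ := q) (F := fun q v => heat (T - q) f (√q * v) * log (heat (T - q) f (√q * v)))
    (F' := fun q v => (log (heat (T - q) f (√q * v)) + 1) *
      (v / (2 * √q) * heat (T - q) f' (√q * v) - heat (T - q) f'' (√q * v) / 2))
    (bound := fun v => M * (|v| / (2 * √δ) * C + C / 2))
    hs (Filter.Eventually.of_forall fun y => ?_)
    (integrable_stdG_of_bound (f := fun v => heat (T - q) f (√q * v) *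
      log (heat (T - q) f (√q * v))) (by fun_prop) fun _ => Hq.abs_mul_log_le _)
    ?_
    (ae_of_all _ fun v y hy => ?_)
    ((((hi.div_const _).mul_const _).add (integrable_const _)).const_mul _)
    (ae_of_all _ fun v y hy => ?_)).2
  · refine key.congr_deriv ?_
    have hpos : 0 < √q := Real.sqrt_pos.2 hq
    set u := heat (T - q) f
    set u1 := heat (T - q) f'
    set u2 := heat (T - q) f''
    have hg'b : ∀ x, |u1 x ^ 2 / u x + (log (u x) + 1) * u2 x| ≤ C ^ 2 / c + M * C := fun x => by
      refine (abs_add_le _ _).trans (add_le_add (Hq.abs_fisher_le x) ?_)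
      rw [abs_mul]
      exact mul_le_mul (hlogb q x) (Hq.b2 x) (abs_nonneg _) hM0
    have hgb : ∀ x, |(log (u x) + 1) * u1 x| ≤ M * C := fun x => by
      rw [abs_mul]
      exact mul_le_mul (hlogb q x) (Hq.b1 x) (abs_nonneg _) hM0
    have hst := integral_id_mul_stdG (g := fun v => (log (u (√q * v)) + 1) * u1 (√q * v))
      (g' := fun v => √q * (u1 (√q * v) ^ 2 / u (√q * v) + (log (u (√q * v)) + 1) * u2 (√q * v)))
      (C := max (M * C) (√q * (C ^ 2 / c + M * C)))
      (fun v => by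
        have h1 : HasDerivAt (fun v => √q * v) (√q) v := by
          simpa using (hasDerivAt_id v).const_mul (√q)
        have h2 := (((Hq.d1 (√q * v)).log (Hq.f_pos _).ne').add_const 1).mul (Hq.d2 (√q * v))
        refine (HasDerivAt.comp v h2 h1).congr_deriv ?_
        simp only [u, u1, u2]
        ring)
      (fun v => (hgb _).trans (le_max_left _ _))
      (fun v => by
        rw [abs_mul, abs_of_pos hpos]
        exact (mul_le_mul_of_nonneg_left (hg'b _) hpos.le).trans (le_max_right _ _))
    have ia : Integrable (fun v => u1 (√q * v) ^ 2 / u (√q * v)) stdG :=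
      integrable_stdG_of_bound (((m1.comp (measurable_const_mul _)).pow_const 2).div
        (m0.comp (measurable_const_mul _))) fun _ => Hq.abs_fisher_le _
    have ib : Integrable (fun v => (log (u (√q * v)) + 1) * u2 (√q * v)) stdG :=
      integrable_stdG_of_bound (by fun_prop) (C := M * C) fun v => by
        rw [abs_mul]
        exact mul_le_mul (hlogb q _) (Hq.b2 _) (abs_nonneg _) hM0
    have ic : Integrable (fun v => v * ((log (u (√q * v)) + 1) * u1 (√q * v))) stdG :=
      (integrable_id_stdG.bdd_mul
        (show Measurable fun v => (log (u (√q * v)) + 1) * u1 (√q * v) by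
          fun_prop).aestronglyMeasurable (ae_of_all _ fun _ => hgb _)).congr
        (ae_of_all _ fun w => mul_comm _ _)
    rw [integral_const_mul, integral_add ia ib] at hst
    have e : ∀ v, (log (u (√q * v)) + 1) * (v / (2 * √q) * u1 (√q * v) - u2 (√q * v) / 2)
        = 1 / (2 * √q) * (v * ((log (u (√q * v)) + 1) * u1 (√q * v)))
          - 1 / 2 * ((log (u (√q * v)) + 1) * u2 (√q * v)) := fun v => by ring
    simp only [e]
    rw [integral_sub (ic.const_mul _) (ib.const_mul _), integral_const_mul, integral_const_mul,
      hst]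
    simp only [heat, zero_add]
    field_simp
    simp only [u, u1]
    ring
  · have m := (H.heat (T - y)).meas
    exact (show Measurable fun v => heat (T - y) f (√y * v) * log (heat (T - y) f (√y * v)) by
      fun_prop).aestronglyMeasurable
  · exact Measurable.aestronglyMeasurable (by fun_prop)
  · have Hy := H.heat (T - y)
    rw [norm_mul, Real.norm_eq_abs, Real.norm_eq_abs]
    refine mul_le_mul (hlogb y _) ((abs_sub _ _).trans (add_le_add ?_ ?_)) (abs_nonneg _) hM0
    · rw [abs_mul]
      exact mul_le_mul (abs_div_sqrt_le hδ hy.1.le v) (Hy.b1 _) (abs_nonneg _) (by positivity)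
    · rw [abs_div, abs_two]
      linarith [Hy.b2 (√y * v)]
  · have h1 := hasDerivAt_heat_overlap H hδ hy.1 (show δ < T - y by linarith [hy.2]) v
    have h2 := (hasDerivAt_mul_log ((H.heat (T - y)).f_pos (√y * v)).ne')
    exact h2.comp y h1

lemma continuous_heatEnt (H : SmoothBdd f f' f'' c C) : Continuous (heatEnt f T) := by
  have hf : Continuous f := continuous_iff_continuousAt.2 fun x => (H.d1 x).continuousAt
  have h1 : ∀ v, Continuous fun q => heat (T - q) f (√q * v) := fun v => by
    refine continuous_of_dominated (F := fun q w => f (√q * v + √(T - q) * w))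
      (bound := fun _ => C) (fun q => ?_)
      (fun q => ae_of_all _ fun w => H.b0 _) (integrable_const _) (ae_of_all _ fun w => by fun_prop)
    exact (show Continuous fun w => f (√q * v + √(T - q) * w) by fun_prop).aestronglyMeasurable
  refine continuous_of_dominated
    (F := fun q v => heat (T - q) f (√q * v) * log (heat (T - q) f (√q * v)))
    (bound := fun _ => C * (|log c| + |log C|)) (fun q => ?_)
    (fun q => ae_of_all _ fun v => (H.heat (T - q)).abs_mul_log_le _) (integrable_const _)
    (ae_of_all _ fun v => (h1 v).mul ((h1 v).log fun q => ((H.heat (T - q)).f_pos _).ne'))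
  have m := (H.heat (T - q)).meas
  exact (show Measurable fun v => heat (T - q) f (√q * v) * log (heat (T - q) f (√q * v)) by
      fun_prop).aestronglyMeasurable

/-- Convexity of the averaged entropy in the overlap. -/
lemma convexOn_heatEnt (H : SmoothBdd f f' f'' c C) :
    ConvexOn ℝ (Set.Icc 0 T) (heatEnt f T) := by
  refine MonotoneOn.convexOn_of_deriv (convex_Icc 0 T) (continuous_heatEnt H).continuousOn ?_ ?_
  · rw [interior_Icc]
    exact fun q hq => (hasDerivAt_heatEnt H hq.1 hq.2).differentiableAt.differentiableWithinAt
  · rw [interior_Icc]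
    intro p hp q hq hpq
    rw [(hasDerivAt_heatEnt H hp.1 hp.2).deriv, (hasDerivAt_heatEnt H hq.1 hq.2).deriv]
    exact div_le_div_of_nonneg_right (heat_fisher_mono H hp.1.le hpq hq.2.le) two_pos.le

/-- A jointly measurable family with two bounded derivatives in the first argument. -/
structure RegularChannel {A : Type*} [MeasurableSpace A] (φ φ' φ'' : ℝ → A → ℝ) (B : ℝ) :
    Prop where
  meas : Measurable fun p : ℝ × A => φ p.1 p.2
  d1 : ∀ a x, HasDerivAt (fun t => φ t a) (φ' x a) x
  d2 : ∀ a x, HasDerivAt (fun t => φ' t a) (φ'' x a) x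
  b0 : ∀ x a, |φ x a| ≤ B
  b1 : ∀ x a, |φ' x a| ≤ B
  b2 : ∀ x a, |φ'' x a| ≤ B

lemma measurable_of_hasDerivAt_param {A : Type*} [MeasurableSpace A] {g g' : ℝ → A → ℝ}
    (hm : ∀ x, Measurable (g x)) (hd : ∀ a x, HasDerivAt (fun t => g t a) (g' x a) x) (x : ℝ) :
    Measurable (g' x) := by
  refine measurable_of_tendsto_metrizable
    (f := fun (n : ℕ) a => ((1 : ℝ) / (n + 1))⁻¹ • (g (x + 1 / (n + 1)) a - g x a))
    (fun n => ?_) ?_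
  · have h1 := hm x
    have h2 := hm (x + 1 / (n + 1))
    fun_prop
  rw [tendsto_pi_nhds]
  intro a
  have h1 := (hasDerivAt_iff_tendsto_slope_zero.1 (hd a x))
  refine h1.comp (tendsto_nhdsWithin_iff.2 ⟨tendsto_one_div_add_atTop_nhds_zero_nat, ?_⟩)
  exact Filter.Eventually.of_forall fun n => by simp; positivity

lemma hasDerivAt_integral_param {A : Type*} [MeasurableSpace A] {μ : Measure A}
    [IsProbabilityMeasure μ] {g g' : ℝ → A → ℝ} {C D : ℝ}
    (hm : ∀ x, Measurable (g x)) (hd : ∀ a x, HasDerivAt (fun t => g t a) (g' x a) x)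
    (hC : ∀ x a, |g x a| ≤ C) (hD : ∀ x a, |g' x a| ≤ D) (x : ℝ) :
    HasDerivAt (fun x => ∫ a, g x a ∂μ) (∫ a, g' x a ∂μ) x :=
  (hasDerivAt_integral_of_dominated_loc_of_deriv_le (s := Set.univ) (bound := fun _ => D)
    Filter.univ_mem (Filter.Eventually.of_forall fun y => (hm y).aestronglyMeasurable)
    (Integrable.of_bound (hm x).aestronglyMeasurable C (ae_of_all _ (hC x)))
    (measurable_of_hasDerivAt_param hm hd x).aestronglyMeasurable
    (ae_of_all _ fun a y _ => hD y a) (integrable_const _) (ae_of_all _ fun a y _ => hd a y)).2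

lemma abs_integral_le_of_abs_le {A : Type*} [MeasurableSpace A] {μ : Measure A}
    [IsProbabilityMeasure μ] {g : A → ℝ} {C : ℝ} (hC : ∀ a, |g a| ≤ C) : |∫ a, g a ∂μ| ≤ C := by
  have := norm_integral_le_of_norm_le_const (μ := μ) (f := g) (C := C) (ae_of_all _ hC)
  simpa using this

section Channel

variable {Δ : ℝ} {kA : ℕ} {PA : Measure (Fin kA → ℝ)}
  {φ φ' φ'' : ℝ → (Fin kA → ℝ) → ℝ} {B : ℝ}

lemma exp_gauss_lower (hΔ : 0 < Δ) {b : ℝ} (hb : |b| ≤ B) (y : ℝ) :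
    exp (-(y ^ 2 + B ^ 2) / Δ) ≤ exp (-(y - b) ^ 2 / (2 * Δ)) := by
  apply exp_le_exp.2
  rw [div_le_div_iff₀ hΔ (by positivity)]
  have hb2 : b ^ 2 ≤ B ^ 2 := sq_le_sq' (by linarith [neg_abs_le b]) ((le_abs_self b).trans hb)
  have : 0 ≤ Δ * (2 * (y ^ 2 + B ^ 2) - (y - b) ^ 2) :=
    mul_nonneg hΔ.le (by nlinarith [sq_nonneg (y + b)])
  nlinarith

lemma exp_gauss_upper (hΔ : 0 < Δ) {b : ℝ} (hb : |b| ≤ B) (y : ℝ) :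
    exp (-(y - b) ^ 2 / (2 * Δ)) ≤ exp (B ^ 2 / (2 * Δ)) * exp (-(1 / (4 * Δ)) * y ^ 2) := by
  rw [← exp_add]
  apply exp_le_exp.2
  have hb2 : b ^ 2 ≤ B ^ 2 := sq_le_sq' (by linarith [neg_abs_le b]) ((le_abs_self b).trans hb)
  have e : B ^ 2 / (2 * Δ) + -(1 / (4 * Δ)) * y ^ 2 = (B ^ 2 - y ^ 2 / 2) / (2 * Δ) := by
    field_simp; ring
  rw [e]
  apply div_le_div_of_nonneg_right _ (by positivity)
  nlinarith [sq_nonneg (y - 2 * b)]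

lemma exp_gauss_le_one (hΔ : 0 < Δ) (b y : ℝ) : exp (-(y - b) ^ 2 / (2 * Δ)) ≤ 1 := by
  rw [exp_le_one_iff, neg_div, neg_nonpos]
  positivity

lemma RegularChannel.measurable_apply (H : RegularChannel φ φ' φ'' B) (x : ℝ) :
    Measurable (φ x) :=
  H.meas.comp (measurable_const.prodMk measurable_id)

lemma RegularChannel.integrable_gauss [IsProbabilityMeasure PA] (H : RegularChannel φ φ' φ'' B)
    (hΔ : 0 < Δ) (y x : ℝ) : Integrable (fun a => exp (-(y - φ x a) ^ 2 / (2 * Δ))) PA := by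
  have := H.measurable_apply x
  refine Integrable.of_bound (Measurable.aestronglyMeasurable (by fun_prop)) 1 (ae_of_all _ ?_)
  intro a
  rw [Real.norm_eq_abs, abs_of_pos (exp_pos _)]
  exact exp_gauss_le_one hΔ _ _

lemma RegularChannel.le_Pout [IsProbabilityMeasure PA] (H : RegularChannel φ φ' φ'' B)
    (hΔ : 0 < Δ) (y x : ℝ) :
    (√(2 * π * Δ))⁻¹ * exp (-(y ^ 2 + B ^ 2) / Δ) ≤ Pout Δ PA φ y x := by
  refine mul_le_mul_of_nonneg_left ?_ (by positivity)
  have := integral_mono (integrable_const _) (H.integrable_gauss (PA := PA) hΔ y x)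
    fun a => exp_gauss_lower hΔ (H.b0 x a) y
  simpa using this

lemma RegularChannel.Pout_le [IsProbabilityMeasure PA] (H : RegularChannel φ φ' φ'' B)
    (hΔ : 0 < Δ) (y x : ℝ) : Pout Δ PA φ y x ≤ (√(2 * π * Δ))⁻¹ := by
  refine mul_le_of_le_one_right (by positivity) ?_
  have := integral_mono (H.integrable_gauss (PA := PA) hΔ y x) (integrable_const 1)
    fun a => exp_gauss_le_one hΔ _ y
  simpa using this

lemma RegularChannel.Pout_le_gauss [IsProbabilityMeasure PA] (H : RegularChannel φ φ' φ'' B)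
    (hΔ : 0 < Δ) (y x : ℝ) : Pout Δ PA φ y x ≤
      (√(2 * π * Δ))⁻¹ * (exp (B ^ 2 / (2 * Δ)) * exp (-(1 / (4 * Δ)) * y ^ 2)) := by
  refine mul_le_mul_of_nonneg_left ?_ (by positivity)
  have := integral_mono (H.integrable_gauss (PA := PA) hΔ y x) (integrable_const _)
    fun a => exp_gauss_upper hΔ (H.b0 x a) y
  simpa using this

lemma RegularChannel.measurable_Pout [IsProbabilityMeasure PA] (H : RegularChannel φ φ' φ'' B) :
    Measurable fun p : ℝ × ℝ => Pout Δ PA φ p.1 p.2 := by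
  have h1 : Measurable fun p : (ℝ × ℝ) × (Fin kA → ℝ) => φ p.1.2 p.2 :=
    H.meas.comp (measurable_fst.snd.prodMk measurable_snd)
  have h : StronglyMeasurable fun p : (ℝ × ℝ) × (Fin kA → ℝ) =>
      exp (-(p.1.1 - φ p.1.2 p.2) ^ 2 / (2 * Δ)) :=
    ((((measurable_fst.fst.sub h1).pow_const 2).neg.div_const _).exp).stronglyMeasurable
  exact h.integral_prod_right.measurable.const_mul _

lemma RegularChannel.smoothBdd_Pout [IsProbabilityMeasure PA] (H : RegularChannel φ φ' φ'' B)
    (hΔ : 0 < Δ) (y : ℝ) :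
    ∃ f' f'' c C, SmoothBdd (Pout Δ PA φ y) f' f'' c C := by
  set g : ℝ → (Fin kA → ℝ) → ℝ := fun x a => exp (-(y - φ x a) ^ 2 / (2 * Δ)) with hg
  set l : ℝ → (Fin kA → ℝ) → ℝ := fun x a => (y - φ x a) * φ' x a / Δ with hl
  set l' : ℝ → (Fin kA → ℝ) → ℝ :=
    fun x a => (-φ' x a * φ' x a + (y - φ x a) * φ'' x a) / Δ with hl'
  have hdl : ∀ a x, HasDerivAt (fun t => l t a) (l' x a) x := fun a x =>
    ((((H.d1 a x).const_sub y).mul (H.d2 a x)).div_const Δ)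
  have hdg : ∀ a x, HasDerivAt (fun t => g t a) (g x a * l x a) x := fun a x => by
    have h1 := ((((H.d1 a x).const_sub y).pow 2).neg.div_const (2 * Δ)).exp
    refine h1.congr_deriv ?_
    simp only [hg, hl]
    field_simp
    norm_num
    rw [neg_div]
    ring
  have hdg' : ∀ a x, HasDerivAt (fun t => g t a * l t a)
      (g x a * l x a * l x a + g x a * l' x a) x := fun a x => (hdg a x).mul (hdl a x)
  have hgm : ∀ x, Measurable (g x) := fun x => by
    have := H.measurable_apply x
    fun_prop
  have hB : 0 ≤ B := (abs_nonneg _).trans (H.b0 0 0)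
  have hg1 : ∀ x a, |g x a| ≤ 1 := fun x a => by
    rw [abs_of_pos (exp_pos _)]
    exact exp_gauss_le_one hΔ _ _
  have hyφ : ∀ x a, |y - φ x a| ≤ |y| + B := fun x a =>
    (abs_sub _ _).trans (add_le_add le_rfl (H.b0 x a))
  set D1 := (|y| + B) * B / Δ
  set D2 := (B * B + (|y| + B) * B) / Δ
  have hD1 : 0 ≤ D1 := by positivity
  have hD2 : 0 ≤ D2 := by positivity
  have hlb : ∀ x a, |l x a| ≤ D1 := fun x a => by
    rw [abs_div, abs_mul, abs_of_pos hΔ]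
    exact div_le_div_of_nonneg_right
      (mul_le_mul (hyφ x a) (H.b1 x a) (abs_nonneg _) (by positivity)) hΔ.le
  have hlb' : ∀ x a, |l' x a| ≤ D2 := fun x a => by
    rw [abs_div, abs_of_pos hΔ]
    refine div_le_div_of_nonneg_right ((abs_add_le _ _).trans (add_le_add ?_ ?_)) hΔ.le
    · rw [abs_mul, abs_neg]
      exact mul_le_mul (H.b1 x a) (H.b1 x a) (abs_nonneg _) hB
    · rw [abs_mul]
      exact mul_le_mul (hyφ x a) (H.b2 x a) (abs_nonneg _) (by positivity)
  have hb1 : ∀ x a, |g x a * l x a| ≤ D1 := fun x a => by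
    rw [abs_mul, ← one_mul D1]
    exact mul_le_mul (hg1 x a) (hlb x a) (abs_nonneg _) zero_le_one
  have hb2 : ∀ x a, |g x a * l x a * l x a + g x a * l' x a| ≤ D1 * D1 + D2 := fun x a => by
    refine (abs_add_le _ _).trans (add_le_add ?_ ?_)
    · rw [abs_mul]
      exact mul_le_mul (hb1 x a) (hlb x a) (abs_nonneg _) hD1
    · rw [abs_mul, ← one_mul D2]
      exact mul_le_mul (hg1 x a) (hlb' x a) (abs_nonneg _) zero_le_one
  have hgm' : ∀ x, Measurable fun a => g x a * l x a := measurable_of_hasDerivAt_param hgm hdg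
  set C0 := (√(2 * π * Δ))⁻¹ with hC0
  have hC0' : 0 < C0 := by positivity
  refine ⟨fun x => C0 * ∫ a, g x a * l x a ∂PA,
    fun x => C0 * ∫ a, (g x a * l x a * l x a + g x a * l' x a) ∂PA,
    C0 * exp (-(y ^ 2 + B ^ 2) / Δ), C0 * (1 + D1 + (D1 * D1 + D2)), by positivity,
    fun x => (hasDerivAt_integral_param hgm hdg hg1 hb1 x).const_mul C0,
    fun x => (hasDerivAt_integral_param hgm' hdg' hb1 hb2 x).const_mul C0,
    H.le_Pout hΔ y, fun x => ?_, fun x => ?_, fun x => ?_⟩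
  all_goals
    change |C0 * _| ≤ _
    rw [abs_mul, abs_of_pos hC0']
    refine mul_le_mul_of_nonneg_left ?_ hC0'.le
  · refine (abs_integral_le_of_abs_le (hg1 x)).trans ?_
    nlinarith
  · refine (abs_integral_le_of_abs_le (hb1 x)).trans ?_
    nlinarith
  · refine (abs_integral_le_of_abs_le (hb2 x)).trans ?_
    nlinarith

lemma integral_stdG_affine (hΔ : 0 < Δ) {G : ℝ → ℝ} (hG : Measurable G) (b : ℝ) :
    ∫ z, G (b + √Δ * z) ∂stdG
      = ∫ y, (√(2 * π * Δ))⁻¹ * exp (-(y - b) ^ 2 / (2 * Δ)) * G y := by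
  have hm : stdG.map (fun z => b + √Δ * z) = gaussianReal b (Real.toNNReal Δ) := by
    have : (fun z => b + √Δ * z) = (fun x => b + x) ∘ fun z => √Δ * z := rfl
    rw [this, ← Measure.map_map (by fun_prop) (by fun_prop), map_const_mul_stdG,
      gaussianReal_map_const_add, Real.sq_sqrt hΔ.le, zero_add]
  rw [← integral_map (φ := fun z => b + √Δ * z) (f := G) (by fun_prop) hG.aestronglyMeasurable, hm,
    integral_gaussianReal_eq_integral_smul (by simpa using hΔ)]
  simp only [gaussianPDFReal, Real.coe_toNNReal _ hΔ.le, smul_eq_mul]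

lemma integral_swap_of_dominated {X : Type*} [MeasurableSpace X] {μ : Measure X}
    [IsProbabilityMeasure μ] {g : X → ℝ → ℝ} (hg : Measurable fun p : X × ℝ => g p.1 p.2)
    {D : ℝ → ℝ} (hD : Integrable D) (hgD : ∀ x y, |g x y| ≤ D y) :
    ∫ x, (∫ y, g x y) ∂μ = ∫ y, (∫ x, g x y ∂μ) :=
  integral_integral_swap
    ((hD.comp_snd μ).mono' hg.aestronglyMeasurable (ae_of_all _ fun p => hgD p.1 p.2))

end Channel

section Channel

variable {Δ : ℝ} {kA : ℕ} {PA : Measure (Fin kA → ℝ)}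
  {φ φ' φ'' : ℝ → (Fin kA → ℝ) → ℝ} {B : ℝ}

/-- A Gaussian-type envelope for `P_out(y|x) log P_out(y|x')`. -/
def entEnvelope (Δ B y : ℝ) : ℝ :=
  (√(2 * π * Δ))⁻¹ * (exp (B ^ 2 / (2 * Δ)) * exp (-(1 / (4 * Δ)) * y ^ 2)) *
    (|log (√(2 * π * Δ))⁻¹| + (y ^ 2 + B ^ 2) / Δ)

lemma integrable_entEnvelope (hΔ : 0 < Δ) (B : ℝ) : Integrable (entEnvelope Δ B) := by
  have hb : 0 < 1 / (4 * Δ) := by positivity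
  have h0 := integrable_exp_neg_mul_sq hb
  have h2 := integrable_rpow_mul_exp_neg_mul_sq hb (s := 2) (by norm_num)
  set C0 := (√(2 * π * Δ))⁻¹
  set E := exp (B ^ 2 / (2 * Δ))
  have := (h0.const_mul (C0 * E * (|log C0| + B ^ 2 / Δ))).add (h2.const_mul (C0 * E / Δ))
  refine this.congr (ae_of_all _ fun y => ?_)
  simp only [entEnvelope, Pi.add_apply, Real.rpow_two]
  ring

lemma RegularChannel.abs_log_le [IsProbabilityMeasure PA] (H : RegularChannel φ φ' φ'' B)
    (hΔ : 0 < Δ) (s y x : ℝ) :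
    |log (heat s (Pout Δ PA φ y) x)| ≤ |log (√(2 * π * Δ))⁻¹| + (y ^ 2 + B ^ 2) / Δ := by
  obtain ⟨f', f'', c, C, hS⟩ := H.smoothBdd_Pout (PA := PA) hΔ y
  have hC0 : 0 < (√(2 * π * Δ))⁻¹ := by positivity
  have hlb := le_heat s hS.meas hS.b0 (H.le_Pout hΔ y) x
  have hpos : 0 < (√(2 * π * Δ))⁻¹ * exp (-(y ^ 2 + B ^ 2) / Δ) := by positivity
  have hub : heat s (Pout Δ PA φ y) x ≤ (√(2 * π * Δ))⁻¹ :=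
    (le_abs_self _).trans (abs_heat_le s (fun x => by
      rw [abs_of_pos (hS.f_pos x)]; exact H.Pout_le hΔ y x) x)
  have h1 := log_le_log hpos hlb
  have h2 := log_le_log (hpos.trans_le hlb) hub
  rw [log_mul hC0.ne' (exp_pos _).ne', log_exp, neg_div] at h1
  have h3 : 0 ≤ (y ^ 2 + B ^ 2) / Δ := by positivity
  rw [abs_le]
  constructor
  · linarith [neg_abs_le (log (√(2 * π * Δ))⁻¹)]
  · linarith [le_abs_self (log (√(2 * π * Δ))⁻¹)]

lemma abs_mul_le_entEnvelope {p l y : ℝ} (hp : 0 ≤ p)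
    (hpb : p ≤ (√(2 * π * Δ))⁻¹ * (exp (B ^ 2 / (2 * Δ)) * exp (-(1 / (4 * Δ)) * y ^ 2)))
    (hl : |l| ≤ |log (√(2 * π * Δ))⁻¹| + (y ^ 2 + B ^ 2) / Δ) :
    |p * l| ≤ entEnvelope Δ B y := by
  rw [abs_mul, abs_of_nonneg hp]
  exact mul_le_mul hpb hl (abs_nonneg _) (by positivity)

lemma RegularChannel.Pout_pos [IsProbabilityMeasure PA] (H : RegularChannel φ φ' φ'' B)
    (hΔ : 0 < Δ) (y x : ℝ) : 0 < Pout Δ PA φ y x :=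
  lt_of_lt_of_le (by positivity) (H.le_Pout hΔ y x)

lemma RegularChannel.heat_Pout_le [IsProbabilityMeasure PA] (H : RegularChannel φ φ' φ'' B)
    (hΔ : 0 < Δ) (s y x : ℝ) : heat s (Pout Δ PA φ y) x ≤
      (√(2 * π * Δ))⁻¹ * (exp (B ^ 2 / (2 * Δ)) * exp (-(1 / (4 * Δ)) * y ^ 2)) :=
  (le_abs_self _).trans (abs_heat_le s (fun x => by
    rw [abs_of_pos (H.Pout_pos hΔ y x)]; exact H.Pout_le_gauss hΔ y x) x)

lemma RegularChannel.heat_Pout_nonneg [IsProbabilityMeasure PA] (H : RegularChannel φ φ' φ'' B)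
    (hΔ : 0 < Δ) (s y x : ℝ) : 0 ≤ heat s (Pout Δ PA φ y) x :=
  integral_nonneg fun _ => (H.Pout_pos hΔ y _).le

lemma RegularChannel.measurable_heat_Pout [IsProbabilityMeasure PA]
    (H : RegularChannel φ φ' φ'' B) (s : ℝ) :
    Measurable fun p : ℝ × ℝ => heat s (Pout Δ PA φ p.1) p.2 := by
  have hP := H.measurable_Pout (Δ := Δ) (PA := PA)
  have h : StronglyMeasurable fun p : (ℝ × ℝ) × ℝ => Pout Δ PA φ p.1.1 (p.1.2 + √s * p.2) :=
    (hP.comp (f := fun p : (ℝ × ℝ) × ℝ => (p.1.1, p.1.2 + √s * p.2))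
      (by fun_prop)).stronglyMeasurable
  exact h.integral_prod_right.measurable

/-- The conditional entropy term of `I_{P_out}` as an integral over the output. -/
lemma RegularChannel.integral_log_eq [IsProbabilityMeasure PA] (H : RegularChannel φ φ' φ'' B)
    (hΔ : 0 < Δ) (q T : ℝ) :
    ∫ v, ∫ w, ∫ a, ∫ z, log (∫ w', Pout Δ PA φ
        (φ (√q * v + √(T - q) * w) a + √Δ * z) (√q * v + √(T - q) * w') ∂stdG)
        ∂stdG ∂PA ∂stdG ∂stdG
      = ∫ y, heatEnt (Pout Δ PA φ y) T q := by
  obtain ⟨L, hL⟩ : ∃ L : ℝ → ℝ → ℝ, ∀ v y, L v y = log (heat (T - q) (Pout Δ PA φ y) (√q * v)) :=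
    ⟨_, fun _ _ => rfl⟩
  have hP := H.measurable_Pout (Δ := Δ) (PA := PA)
  have hH := H.measurable_heat_Pout (Δ := Δ) (PA := PA) (T - q)
  have hLm : Measurable fun p : ℝ × ℝ => L p.1 p.2 := by
    simp only [hL]
    exact (hH.comp (f := fun p : ℝ × ℝ => (p.2, √q * p.1)) (by fun_prop)).log
  have hLm' : ∀ v, Measurable (L v) := fun v => hLm.comp (measurable_const.prodMk measurable_id)
  have hLb : ∀ v y, |L v y| ≤ |log (√(2 * π * Δ))⁻¹| + (y ^ 2 + B ^ 2) / Δ := fun v y => by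
    rw [hL]; exact H.abs_log_le hΔ _ _ _
  have hD := integrable_entEnvelope hΔ B
  have hC0 : 0 ≤ (√(2 * π * Δ))⁻¹ := by positivity
  have step1 : ∀ v x, ∫ a, ∫ z, L v (φ x a + √Δ * z) ∂stdG ∂PA
      = ∫ y, Pout Δ PA φ y x * L v y := fun v x => by
    have hφ := H.measurable_apply x
    have hLv := hLm' v
    simp only [integral_stdG_affine hΔ (hLm' v)]
    rw [integral_swap_of_dominated (g := fun a y =>
      (√(2 * π * Δ))⁻¹ * exp (-(y - φ x a) ^ 2 / (2 * Δ)) * L v y) ?_ hD fun a y => ?_]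
    · congr 1; ext y
      rw [integral_mul_const, integral_const_mul]
      rfl
    · fun_prop
    · refine abs_mul_le_entEnvelope (by positivity) ?_ (hLb v y)
      exact mul_le_mul_of_nonneg_left (exp_gauss_upper hΔ (H.b0 x a) y) hC0
  have step2 : ∀ v, ∫ w, (∫ y, Pout Δ PA φ y (√q * v + √(T - q) * w) * L v y) ∂stdG
      = ∫ y, heat (T - q) (Pout Δ PA φ y) (√q * v) * L v y := fun v => by
    rw [integral_swap_of_dominated (g := fun w y =>
      Pout Δ PA φ y (√q * v + √(T - q) * w) * L v y) ?_ hD fun w y => ?_]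
    · congr 1; ext y
      rw [integral_mul_const]
      rfl
    · exact (hP.comp (f := fun p : ℝ × ℝ => (p.2, √q * v + √(T - q) * p.1)) (by fun_prop)).mul
        ((hLm' v).comp measurable_snd)
    · exact abs_mul_le_entEnvelope (H.Pout_pos hΔ _ _).le (H.Pout_le_gauss hΔ _ _) (hLb v y)
  have e : ∀ v w a z, log (∫ w', Pout Δ PA φ
        (φ (√q * v + √(T - q) * w) a + √Δ * z) (√q * v + √(T - q) * w') ∂stdG)
      = L v (φ (√q * v + √(T - q) * w) a + √Δ * z) := fun v w a z => (hL _ _).symm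
  simp only [e, step1, step2]
  rw [integral_swap_of_dominated (g := fun v y =>
    heat (T - q) (Pout Δ PA φ y) (√q * v) * L v y) ?_ hD fun v y => ?_]
  · simp only [hL, heatEnt]
  · exact (hH.comp (f := fun p : ℝ × ℝ => (p.2, √q * p.1)) (by fun_prop)).mul hLm
  · exact abs_mul_le_entEnvelope (H.heat_Pout_nonneg hΔ _ _ _) (H.heat_Pout_le hΔ _ _ _) (hLb v y)

lemma RegularChannel.integrable_heatEnt [IsProbabilityMeasure PA] (H : RegularChannel φ φ' φ'' B)
    (hΔ : 0 < Δ) (q T : ℝ) : Integrable fun y => heatEnt (Pout Δ PA φ y) T q := by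
  have hH := H.measurable_heat_Pout (Δ := Δ) (PA := PA) (T - q)
  have hm : Measurable fun p : ℝ × ℝ => heat (T - q) (Pout Δ PA φ p.1) (√q * p.2) :=
    hH.comp (f := fun p : ℝ × ℝ => (p.1, √q * p.2)) (by fun_prop)
  have hs : StronglyMeasurable fun p : ℝ × ℝ => heat (T - q) (Pout Δ PA φ p.1) (√q * p.2) *
    log (heat (T - q) (Pout Δ PA φ p.1) (√q * p.2)) := (hm.mul hm.log).stronglyMeasurable
  refine (integrable_entEnvelope hΔ B).mono' hs.integral_prod_right.aestronglyMeasurable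
    (ae_of_all _ fun y => abs_integral_stdG_le fun v => ?_)
  exact abs_mul_le_entEnvelope (H.heat_Pout_nonneg hΔ _ _ _) (H.heat_Pout_le hΔ _ _ _)
    (H.abs_log_le hΔ _ _ _)

/-- The channel mutual information is concave in the overlap. -/
theorem RegularChannel.concaveOn_IPout [IsProbabilityMeasure PA]
    (H : RegularChannel φ φ' φ'' B) (hΔ : 0 < Δ) (T : ℝ) :
    ConcaveOn ℝ (Set.Icc 0 T) fun q => IPout Δ PA φ q T := by
  have h : ConvexOn ℝ (Set.Icc 0 T) fun q => ∫ y, heatEnt (Pout Δ PA φ y) T q :=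
    integral_convexOn_of_integrand_ae (f := fun y q => heatEnt (Pout Δ PA φ y) T q)
      (convex_Icc 0 T)
      (ae_of_all _ fun y => by
        obtain ⟨f', f'', c, C, hS⟩ := H.smoothBdd_Pout (PA := PA) hΔ y
        exact convexOn_heatEnt hS)
      fun q _ => H.integrable_heatEnt hΔ q T
  simp only [IPout, H.integral_log_eq hΔ]
  exact (concaveOn_const _ (convex_Icc 0 T)).sub h

end Channel

section Prior

variable {P0 : Measure ℝ} [IsProbabilityMeasure P0] {F : Finset ℝ}

lemma integrable_of_ae_mem_finset (hF : ∀ᵐ x ∂P0, x ∈ (F : Set ℝ)) (g : ℝ → ℝ) :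
    Integrable g P0 := by
  have h : IntegrableOn g (F : Set ℝ) P0 := IntegrableOn.of_finite F.finite_toSet
  rwa [IntegrableOn, Measure.restrict_eq_self_of_ae_mem hF] at h

lemma integral_eq_sum_of_ae_mem_finset (hF : ∀ᵐ x ∂P0, x ∈ (F : Set ℝ)) (g : ℝ → ℝ) :
    ∫ x, g x ∂P0 = ∑ x ∈ F, P0.real {x} * g x := by
  have h := setIntegral_finset F (f := g) (μ := P0) (IntegrableOn.of_finite F.finite_toSet)
  rw [Measure.restrict_eq_self_of_ae_mem hF] at h
  simpa using h

lemma exists_atom_lower_bound (hF : ∀ᵐ x ∂P0, x ∈ (F : Set ℝ)) :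
    ∃ c, 0 < c ∧ c ≤ 1 ∧ ∀ᵐ x ∂P0, c ≤ P0.real {x} := by
  obtain ⟨c, hc0, hc1, hc⟩ : ∃ c : ℝ, 0 < c ∧ c ≤ 1 ∧
      ∀ x ∈ F, P0.real {x} ≠ 0 → c ≤ P0.real {x} := by
    clear hF
    induction F using Finset.induction_on with
    | empty => exact ⟨1, one_pos, le_rfl, by simp⟩
    | insert a s ha ih =>
      obtain ⟨c, h0, h1, h2⟩ := ih
      by_cases hz : P0.real {a} = 0
      · exact ⟨c, h0, h1, by simpa [hz] using h2⟩
      · refine ⟨min c (P0.real {a}), lt_min h0 (lt_of_le_of_ne measureReal_nonneg (Ne.symm hz)),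
          (min_le_left _ _).trans h1, fun x hx hx0 => ?_⟩
        rcases Finset.mem_insert.1 hx with rfl | hx
        · exact min_le_right _ _
        · exact (min_le_left _ _).trans (h2 x hx hx0)
  refine ⟨c, hc0, hc1, ?_⟩
  have hz : ∀ᵐ x ∂P0, ∀ y ∈ (F : Set ℝ), P0.real {y} = 0 → x ≠ y := by
    rw [ae_ball_iff F.countable_toSet]
    intro y _
    by_cases h0 : P0.real {y} = 0
    · have : P0 {y} = 0 := by simpa [measureReal_def, ENNReal.toReal_eq_zero_iff] using h0
      filter_upwards [compl_mem_ae_iff.2 this] with x hx _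
      exact hx
    · exact ae_of_all _ fun x h => absurd h h0
  filter_upwards [hF, hz] with x hx hx'
  exact hc x hx fun h0 => hx' x hx h0 rfl

lemma integral_sparsePrior (hF : ∀ᵐ x ∂P0, x ∈ (F : Set ℝ)) {ρ : ℝ} (h0 : 0 ≤ ρ) (h1 : ρ ≤ 1)
    (g : ℝ → ℝ) : ∫ x, g x ∂(sparsePrior ρ P0) = (1 - ρ) * g 0 + ρ * ∫ x, g x ∂P0 := by
  have hd : Integrable g (Measure.dirac (0 : ℝ)) := integrable_dirac (by simp)
  rw [sparsePrior, integral_add_measure (hd.smul_measure ENNReal.ofReal_ne_top)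
    ((integrable_of_ae_mem_finset hF g).smul_measure ENNReal.ofReal_ne_top),
    integral_smul_measure, integral_smul_measure, integral_dirac,
    ENNReal.toReal_ofReal (by linarith), ENNReal.toReal_ofReal h0]
  rfl

/-- Likelihood ratio of the scalar Gaussian channel averaged over the prior. -/
def avgLik (P0 : Measure ℝ) (r xs z : ℝ) : ℝ :=
  ∫ x, exp (r * xs * x + √r * z * x - r * x ^ 2 / 2) ∂P0

/-- Gaussian expectation of the log-partition function at the signal value `xs`. -/
def logPart (ρ : ℝ) (P0 : Measure ℝ) (r xs : ℝ) : ℝ :=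
  ∫ z, log ((1 - ρ) + ρ * avgLik P0 r xs z) ∂stdG

lemma psiP_sparsePrior (hF : ∀ᵐ x ∂P0, x ∈ (F : Set ℝ)) {ρ : ℝ} (h0 : 0 ≤ ρ) (h1 : ρ ≤ 1)
    (r : ℝ) : psiP (sparsePrior ρ P0) r
      = (1 - ρ) * logPart ρ P0 r 0 + ρ * ∫ x, logPart ρ P0 r x ∂P0 := by
  unfold psiP
  rw [integral_sparsePrior hF h0 h1]
  have e : ∀ xs z, ∫ x, exp (r * xs * x + √r * z * x - r * x ^ 2 / 2) ∂(sparsePrior ρ P0)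
      = (1 - ρ) + ρ * avgLik P0 r xs z := fun xs z => by
    rw [integral_sparsePrior hF h0 h1]
    simp [avgLik]
  simp only [e]
  rfl

omit [IsProbabilityMeasure P0] in
lemma avgLik_nonneg (r xs z : ℝ) : 0 ≤ avgLik P0 r xs z := integral_nonneg fun _ => (exp_pos _).le

lemma continuous_avgLik (hF : ∀ᵐ x ∂P0, x ∈ (F : Set ℝ)) (r xs : ℝ) :
    Continuous (avgLik P0 r xs) := by
  have : avgLik P0 r xs = fun z =>
      ∑ x ∈ F, P0.real {x} * exp (r * xs * x + √r * z * x - r * x ^ 2 / 2) :=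
    funext fun z => integral_eq_sum_of_ae_mem_finset hF _
  rw [this]
  fun_prop

lemma integral_exp_mul_stdG (t : ℝ) : ∫ z, exp (t * z) ∂stdG = exp (t ^ 2 / 2) := by
  have h := congrFun (mgf_fun_id_gaussianReal (μ := 0) (v := 1)) t
  simpa [mgf, stdG] using h

lemma integral_avgLik_zero (hF : ∀ᵐ x ∂P0, x ∈ (F : Set ℝ)) {r : ℝ} (hr : 0 ≤ r) :
    Integrable (avgLik P0 r 0) stdG ∧ ∫ z, avgLik P0 r 0 z ∂stdG = 1 := by
  have e : avgLik P0 r 0 = fun z =>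
      ∑ x ∈ F, P0.real {x} * exp (-(r * x ^ 2 / 2)) * exp (√r * x * z) := by
    funext z
    rw [avgLik, integral_eq_sum_of_ae_mem_finset hF]
    refine Finset.sum_congr rfl fun x _ => ?_
    rw [mul_assoc (P0.real {x}), ← exp_add]
    congr 2
    ring
  have hi : ∀ x ∈ F, Integrable
      (fun z => P0.real {x} * exp (-(r * x ^ 2 / 2)) * exp (√r * x * z)) stdG := fun x _ =>
    (integrable_exp_mul_gaussianReal _).const_mul _
  refine ⟨e ▸ integrable_finsetSum _ hi, ?_⟩
  rw [e, integral_finsetSum _ hi]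
  have h1 := integral_eq_sum_of_ae_mem_finset hF (fun _ => (1 : ℝ))
  simp only [integral_const, probReal_univ, smul_eq_mul, mul_one] at h1
  rw [h1]
  refine Finset.sum_congr rfl fun x _ => ?_
  rw [integral_const_mul, integral_exp_mul_stdG, mul_assoc, ← exp_add, mul_pow, Real.sq_sqrt hr]
  simp

variable {M : ℝ}

lemma avgLik_le (hF : ∀ᵐ x ∂P0, x ∈ (F : Set ℝ)) (hM : ∀ x ∈ F, |x| ≤ M) {r : ℝ} (hr : 0 ≤ r)
    (xs z : ℝ) : avgLik P0 r xs z ≤ exp (r * xs ^ 2 / 2 + √r * |z| * M) := by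
  have h : avgLik P0 r xs z ≤ ∫ _, exp (r * xs ^ 2 / 2 + √r * |z| * M) ∂P0 := by
    refine integral_mono_ae (integrable_of_ae_mem_finset hF _) (integrable_const _) ?_
    filter_upwards [hF] with x hx
    apply exp_le_exp.2
    have h1 : √r * z * x ≤ √r * |z| * M := by
      rw [mul_assoc, mul_assoc]
      refine mul_le_mul_of_nonneg_left ?_ (Real.sqrt_nonneg _)
      calc z * x ≤ |z * x| := le_abs_self _
        _ = |z| * |x| := abs_mul _ _
        _ ≤ |z| * M := mul_le_mul_of_nonneg_left (hM x hx) (abs_nonneg _)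
    nlinarith [mul_nonneg hr (sq_nonneg (xs - x))]
  simpa using h

lemma le_avgLik (hF : ∀ᵐ x ∂P0, x ∈ (F : Set ℝ)) {c x : ℝ} (hc : c ≤ P0.real {x}) (r z : ℝ) :
    c * exp (r * x ^ 2 / 2 + √r * z * x) ≤ avgLik P0 r x z := by
  have h := setIntegral_le_integral (μ := P0) (s := {x})
    (f := fun y => exp (r * x * y + √r * z * y - r * y ^ 2 / 2))
    (integrable_of_ae_mem_finset hF _) (ae_of_all _ fun _ => (exp_pos _).le)
  rw [integral_singleton] at h
  refine le_trans ?_ h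
  rw [smul_eq_mul]
  have e : r * x * x + √r * z * x - r * x ^ 2 / 2 = r * x ^ 2 / 2 + √r * z * x := by ring
  rw [e]
  exact mul_le_mul_of_nonneg_right hc (exp_pos _).le

variable {ρ r : ℝ}

omit [IsProbabilityMeasure P0] in
lemma log_one_sub_le_log_part (h0 : 0 < ρ) (h1 : ρ < 1) (xs z : ℝ) :
    log (1 - ρ) ≤ log ((1 - ρ) + ρ * avgLik P0 r xs z) :=
  log_le_log (by linarith) (by linarith [mul_nonneg h0.le (avgLik_nonneg (P0 := P0) r xs z)])

lemma log_part_le (hF : ∀ᵐ x ∂P0, x ∈ (F : Set ℝ)) (hM : ∀ x ∈ F, |x| ≤ M) (hM0 : 0 ≤ M)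
    (h0 : 0 < ρ) (h1 : ρ < 1) (hr : 0 ≤ r) (xs z : ℝ) :
    log ((1 - ρ) + ρ * avgLik P0 r xs z)
      ≤ log 2 + max 0 (log ρ + r * xs ^ 2 / 2) + √r * M * |z| := by
  have hpos : 0 < (1 - ρ) + ρ * avgLik P0 r xs z := by
    linarith [mul_nonneg h0.le (avgLik_nonneg (P0 := P0) r xs z)]
  rw [← exp_le_exp, exp_log hpos, add_assoc, exp_add, exp_log two_pos]
  set m := max 0 (log ρ + r * xs ^ 2 / 2) + √r * M * |z| with hm
  have hq : 0 ≤ √r * M * |z| := by positivity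
  have hm0 : 1 ≤ exp m := one_le_exp (add_nonneg (le_max_left _ _) hq)
  have h2 : ρ * avgLik P0 r xs z ≤ exp m := by
    calc ρ * avgLik P0 r xs z ≤ ρ * exp (r * xs ^ 2 / 2 + √r * |z| * M) :=
          mul_le_mul_of_nonneg_left (avgLik_le hF hM hr xs z) h0.le
      _ = exp (log ρ + r * xs ^ 2 / 2 + √r * M * |z|) := by
          rw [show log ρ + r * xs ^ 2 / 2 + √r * M * |z|
              = log ρ + (r * xs ^ 2 / 2 + √r * |z| * M) by ring, exp_add (log ρ), exp_log h0]
      _ ≤ exp m := exp_le_exp.2 (add_le_add (le_max_right _ _) le_rfl)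
  linarith

lemma integrable_log_part (hF : ∀ᵐ x ∂P0, x ∈ (F : Set ℝ)) (hM : ∀ x ∈ F, |x| ≤ M)
    (hM0 : 0 ≤ M) (h0 : 0 < ρ) (h1 : ρ < 1) (hr : 0 ≤ r) (xs : ℝ) :
    Integrable (fun z => log ((1 - ρ) + ρ * avgLik P0 r xs z)) stdG := by
  have hi : Integrable (fun z => |log (1 - ρ)| +
      (log 2 + max 0 (log ρ + r * xs ^ 2 / 2) + √r * M * |z|)) stdG :=
    (integrable_const _).add ((integrable_const _).add (integrable_id_stdG.abs.const_mul _))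
  have hc := continuous_avgLik hF r xs
  refine hi.mono' (Measurable.aestronglyMeasurable ?_) (ae_of_all _ fun z => ?_)
  · exact ((hc.measurable.const_mul ρ).const_add (1 - ρ)).log
  · have ha := log_one_sub_le_log_part (P0 := P0) (r := r) h0 h1 xs z
    have hb := log_part_le hF hM hM0 h0 h1 hr xs z
    have hp : 0 ≤ log 2 + max 0 (log ρ + r * xs ^ 2 / 2) + √r * M * |z| :=
      add_nonneg (add_nonneg (log_nonneg one_le_two) (le_max_left _ _)) (by positivity)
    rw [Real.norm_eq_abs, abs_le]
    constructor
    · linarith [neg_abs_le (log (1 - ρ))]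
    · linarith [abs_nonneg (log (1 - ρ))]

lemma integral_abs_stdG_le : ∫ z, |z| ∂stdG ≤ 1 := by
  have h : ∫ z, |z| ∂stdG ≤ ∫ z, (1 / 2 + 1 / 2 * z ^ 2) ∂stdG :=
    integral_mono integrable_id_stdG.abs
      ((integrable_const _).add (integrable_sq_stdG.const_mul _)) fun z => by
        simp only
        nlinarith [sq_nonneg (|z| - 1), sq_abs z]
  rw [integral_add (integrable_const _) (integrable_sq_stdG.const_mul _), integral_const_mul,
    integral_sq_stdG] at h
  norm_num at h
  exact h

lemma log_one_sub_le_logPart (hF : ∀ᵐ x ∂P0, x ∈ (F : Set ℝ)) (hM : ∀ x ∈ F, |x| ≤ M)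
    (hM0 : 0 ≤ M) (h0 : 0 < ρ) (h1 : ρ < 1) (hr : 0 ≤ r) (xs : ℝ) :
    log (1 - ρ) ≤ logPart ρ P0 r xs := by
  have := integral_mono (integrable_const (log (1 - ρ)))
    (integrable_log_part hF hM hM0 h0 h1 hr xs)
    fun z => log_one_sub_le_log_part (P0 := P0) (r := r) h0 h1 xs z
  simpa [logPart] using this

lemma le_logPart_of_atom (hF : ∀ᵐ x ∂P0, x ∈ (F : Set ℝ)) (hM : ∀ x ∈ F, |x| ≤ M)
    (hM0 : 0 ≤ M) (h0 : 0 < ρ) (h1 : ρ < 1) (hr : 0 ≤ r) {c x : ℝ} (hc0 : 0 < c)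
    (hc : c ≤ P0.real {x}) : log ρ + log c + r * x ^ 2 / 2 ≤ logPart ρ P0 r x := by
  have h := integral_mono
    ((integrable_const (log ρ + log c + r * x ^ 2 / 2)).add (integrable_id_stdG.const_mul (√r * x)))
    (integrable_log_part hF hM hM0 h0 h1 hr x) fun z => by
      have hp : 0 < ρ * (c * exp (r * x ^ 2 / 2 + √r * z * x)) := by positivity
      have h2 := mul_le_mul_of_nonneg_left (le_avgLik hF hc r z) h0.le
      have h3 := log_le_log hp (h2.trans (by linarith : _ ≤ (1 - ρ) + ρ * avgLik P0 r x z))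
      rw [log_mul h0.ne' (by positivity), log_mul hc0.ne' (exp_pos _).ne', log_exp] at h3
      simp only [Pi.add_apply]
      linarith
  rw [integral_add' (integrable_const _) (integrable_id_stdG.const_mul _), integral_const_mul,
    integral_id_stdG] at h
  simpa [logPart] using h

lemma logPart_le (hF : ∀ᵐ x ∂P0, x ∈ (F : Set ℝ)) (hM : ∀ x ∈ F, |x| ≤ M) (hM0 : 0 ≤ M)
    (h0 : 0 < ρ) (h1 : ρ < 1) (hr : 0 ≤ r) (xs : ℝ) :
    logPart ρ P0 r xs ≤ log 2 + max 0 (log ρ + r * xs ^ 2 / 2) + √r * M := by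
  have h := integral_mono (integrable_log_part hF hM hM0 h0 h1 hr xs)
    ((integrable_const (log 2 + max 0 (log ρ + r * xs ^ 2 / 2))).add
      (integrable_id_stdG.abs.const_mul (√r * M)))
    fun z => log_part_le hF hM hM0 h0 h1 hr xs z
  rw [integral_add' (integrable_const _) (integrable_id_stdG.abs.const_mul _),
    integral_const_mul] at h
  simp only [integral_const, probReal_univ, smul_eq_mul, one_mul] at h
  refine h.trans (add_le_add le_rfl ?_)
  exact mul_le_of_le_one_right (by positivity) integral_abs_stdG_le

lemma logPart_zero_le (hF : ∀ᵐ x ∂P0, x ∈ (F : Set ℝ)) (hM : ∀ x ∈ F, |x| ≤ M) (hM0 : 0 ≤ M)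
    (h0 : 0 < ρ) (h1 : ρ < 1) (hr : 0 ≤ r) : logPart ρ P0 r 0 ≤ 0 := by
  obtain ⟨hi, he⟩ := integral_avgLik_zero (P0 := P0) hF hr
  have h := integral_mono (integrable_log_part hF hM hM0 h0 h1 hr 0)
    ((hi.const_mul ρ).sub (integrable_const ρ)) fun z => by
      have hpos : 0 < (1 - ρ) + ρ * avgLik P0 r 0 z := by
        linarith [mul_nonneg h0.le (avgLik_nonneg (P0 := P0) r 0 z)]
      have := log_le_sub_one_of_pos hpos
      simp only [Pi.sub_apply]
      linarith
  rw [integral_sub' (hi.const_mul ρ) (integrable_const ρ), integral_const_mul, he] at h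
  simpa [logPart] using h

/-- The limiting rescaled mutual information of the scalar channel. -/
def limMI (γ : ℝ) (P0 : Measure ℝ) (s : ℝ) : ℝ := ∫ x, min (s * x ^ 2 / 2) (1 / γ) ∂P0

lemma IP0_rescaled (hF : ∀ᵐ x ∂P0, x ∈ (F : Set ℝ)) (h0 : 0 < ρ) (h1 : ρ < 1) {γ : ℝ}
    (hγ : 0 < γ) (s : ℝ) :
    1 / (γ * ρ * |log ρ|) * IP0 ρ P0 (γ * ρ * |log ρ| / ρ * s)
      = (∫ x, (γ * |log ρ| * s * x ^ 2 / 2 - logPart ρ P0 (γ * |log ρ| * s) x) ∂P0)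
          / (γ * |log ρ|)
        + (1 - ρ) * -logPart ρ P0 (γ * |log ρ| * s) 0 / (γ * ρ * |log ρ|) := by
  have hL : 0 < |log ρ| := abs_pos.2 (log_neg h0 h1).ne
  have e : γ * ρ * |log ρ| / ρ * s = γ * |log ρ| * s := by field_simp
  rw [e, IP0, psiP_sparsePrior hF h0.le h1.le,
    integral_sub (integrable_of_ae_mem_finset hF _) (integrable_of_ae_mem_finset hF _),
    secondMoment]
  have e2 : ∫ x, γ * |log ρ| * s * x ^ 2 / 2 ∂P0 = γ * |log ρ| * s / 2 * ∫ x, x ^ 2 ∂P0 := by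
    rw [← integral_const_mul]; congr 1; ext x; ring
  rw [e2]
  field_simp
  ring

lemma neg_log_one_sub_le (h0 : 0 < ρ) (h1 : ρ ≤ 1 / 2) : -log (1 - ρ) ≤ 2 * ρ := by
  have h := one_sub_inv_le_log_of_pos (show 0 < 1 - ρ by linarith)
  have h2 : (1 - ρ)⁻¹ ≤ 1 + 2 * ρ := by
    rw [inv_le_iff_one_le_mul₀ (by linarith)]
    nlinarith
  linarith

lemma IP0_rescaled_le (hF : ∀ᵐ x ∂P0, x ∈ (F : Set ℝ)) (hM : ∀ x ∈ F, |x| ≤ M) (hM0 : 0 ≤ M)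
    {γ : ℝ} (hγ : 0 < γ) : ∃ K, ∀ ρ, 0 < ρ → ρ ≤ 1 / 2 → ∀ s, 0 ≤ s →
      1 / (γ * ρ * |log ρ|) * IP0 ρ P0 (γ * ρ * |log ρ| / ρ * s)
        ≤ limMI γ P0 s + K / |log ρ| := by
  obtain ⟨c, hc0, hc1, hc⟩ := exists_atom_lower_bound hF
  refine ⟨(3 - log c) / γ, fun ρ h0 h1 s hs => ?_⟩
  have h1' : ρ < 1 := by linarith
  rw [IP0_rescaled hF h0 h1' hγ]
  have hlog := log_neg h0 h1'
  have hLe : |log ρ| = -log ρ := abs_of_neg hlog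
  have hL : 0 < |log ρ| := abs_pos.2 hlog.ne
  set L := |log ρ|
  have hr : 0 ≤ γ * L * s := by positivity
  have hl := neg_log_one_sub_le h0 h1
  have hlc := log_nonpos hc0.le hc1
  have hA : ∫ x, (γ * L * s * x ^ 2 / 2 - logPart ρ P0 (γ * L * s) x) ∂P0
      ≤ ∫ x, (γ * L * min (s * x ^ 2 / 2) (1 / γ) + (1 - log c)) ∂P0 := by
    refine integral_mono_ae (integrable_of_ae_mem_finset hF _) (integrable_of_ae_mem_finset hF _) ?_
    filter_upwards [hc] with x hx
    have a1 := log_one_sub_le_logPart hF hM hM0 h0 h1' hr x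
    have a2 := le_logPart_of_atom hF hM hM0 h0 h1' hr hc0 hx
    rcases min_cases (s * x ^ 2 / 2) (1 / γ) with ⟨h, _⟩ | ⟨h, _⟩ <;> rw [h]
    · have : γ * L * (s * x ^ 2 / 2) = γ * L * s * x ^ 2 / 2 := by ring
      linarith
    · have : γ * L * (1 / γ) = L := by field_simp
      linarith
  rw [integral_add (integrable_of_ae_mem_finset hF _) (integrable_const _), integral_const_mul]
    at hA
  simp only [integral_const, probReal_univ, smul_eq_mul, one_mul] at hA
  have hB : (1 - ρ) * -logPart ρ P0 (γ * L * s) 0 ≤ 2 * ρ := by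
    have a1 := log_one_sub_le_logPart hF hM hM0 h0 h1' hr 0
    nlinarith
  calc _ ≤ (γ * L * limMI γ P0 s + (1 - log c)) / (γ * L) + 2 * ρ / (γ * ρ * L) :=
        add_le_add (div_le_div_of_nonneg_right hA (by positivity))
          (div_le_div_of_nonneg_right hB (by positivity))
    _ = _ := by field_simp; ring

lemma le_IP0_rescaled (hF : ∀ᵐ x ∂P0, x ∈ (F : Set ℝ)) (hM : ∀ x ∈ F, |x| ≤ M) (hM0 : 0 ≤ M)
    {γ : ℝ} (hγ : 0 < γ) (h0 : 0 < ρ) (h1 : ρ < 1) {s : ℝ} (hs : 0 ≤ s) :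
    limMI γ P0 s - (log 2 + √(γ * |log ρ| * s) * M) / (γ * |log ρ|)
      ≤ 1 / (γ * ρ * |log ρ|) * IP0 ρ P0 (γ * ρ * |log ρ| / ρ * s) := by
  rw [IP0_rescaled hF h0 h1 hγ]
  have hlog := log_neg h0 h1
  have hLe : |log ρ| = -log ρ := abs_of_neg hlog
  have hL : 0 < |log ρ| := abs_pos.2 hlog.ne
  set L := |log ρ|
  have hr : 0 ≤ γ * L * s := by positivity
  have hA : ∫ x, (γ * L * min (s * x ^ 2 / 2) (1 / γ) - (log 2 + √(γ * L * s) * M)) ∂P0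
      ≤ ∫ x, (γ * L * s * x ^ 2 / 2 - logPart ρ P0 (γ * L * s) x) ∂P0 := by
    refine integral_mono (integrable_of_ae_mem_finset hF _) (integrable_of_ae_mem_finset hF _) ?_
    intro x
    have a1 := logPart_le hF hM hM0 h0 h1 hr x
    have b1 : γ * L * min (s * x ^ 2 / 2) (1 / γ) ≤ γ * L * s * x ^ 2 / 2 := by
      have := mul_le_mul_of_nonneg_left (min_le_left (s * x ^ 2 / 2) (1 / γ))
        (show 0 ≤ γ * L by positivity)
      linarith
    have b2 : γ * L * min (s * x ^ 2 / 2) (1 / γ) ≤ L := by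
      have := mul_le_mul_of_nonneg_left (min_le_right (s * x ^ 2 / 2) (1 / γ))
        (show 0 ≤ γ * L by positivity)
      have e : γ * L * (1 / γ) = L := by field_simp
      linarith
    simp only
    rcases max_cases 0 (log ρ + γ * L * s * x ^ 2 / 2) with ⟨h, _⟩ | ⟨h, _⟩ <;> rw [h] at a1 <;>
      linarith
  rw [integral_sub (integrable_of_ae_mem_finset hF _) (integrable_const _), integral_const_mul]
    at hA
  simp only [integral_const, probReal_univ, smul_eq_mul, one_mul] at hA
  have hB : 0 ≤ (1 - ρ) * -logPart ρ P0 (γ * L * s) 0 / (γ * ρ * L) :=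
    div_nonneg (mul_nonneg (by linarith)
      (neg_nonneg.2 (logPart_zero_le hF hM hM0 h0 h1 hr))) (by positivity)
  have hC := div_le_div_of_nonneg_right hA (show 0 ≤ γ * L by positivity)
  have hD : (γ * L * limMI γ P0 s - (log 2 + √(γ * L * s) * M)) / (γ * L)
      = limMI γ P0 s - (log 2 + √(γ * L * s) * M) / (γ * L) := by
    field_simp
  change (γ * L * limMI γ P0 s - (log 2 + √(γ * L * s) * M)) / (γ * L) ≤ _ at hC
  linarith

end Prior

section Thresholds

variable {P0 : Measure ℝ} [IsProbabilityMeasure P0] {F : Finset ℝ}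

lemma truncSMge_add_headSM (hF : ∀ᵐ x ∂P0, x ∈ (F : Set ℝ)) (t : ℝ) :
    truncSMge P0 t + headSM P0 t = secondMoment P0 := by
  rw [truncSMge, headSM, secondMoment,
    ← integral_add (integrable_of_ae_mem_finset hF _) (integrable_of_ae_mem_finset hF _)]
  congr 1
  ext x
  by_cases h : t ≤ |x|
  · simp [h, not_lt.2 h]
  · simp [h, not_le.1 h]

omit [IsProbabilityMeasure P0] in
lemma truncSMge_nonneg (t : ℝ) : 0 ≤ truncSMge P0 t :=
  integral_nonneg fun x => by dsimp only [Pi.zero_apply]; split_ifs <;> positivity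

omit [IsProbabilityMeasure P0] in
lemma headSM_nonneg (t : ℝ) : 0 ≤ headSM P0 t :=
  integral_nonneg fun x => by dsimp only [Pi.zero_apply]; split_ifs <;> positivity

omit [IsProbabilityMeasure P0] in
lemma headSM_eq_zero {t : ℝ} (h : ∀ᵐ x ∂P0, t ≤ |x|) : headSM P0 t = 0 := by
  rw [headSM, integral_eq_zero_of_ae]
  filter_upwards [h] with x hx
  simp [not_lt.2 hx]

omit [IsProbabilityMeasure P0] in
lemma truncSMge_eq_zero {t : ℝ} (h : ∀ᵐ x ∂P0, |x| < t) : truncSMge P0 t = 0 := by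
  rw [truncSMge, integral_eq_zero_of_ae]
  filter_upwards [h] with x hx
  simp [not_le.2 hx]

omit [IsProbabilityMeasure P0] in
lemma tailProb_eq_zero {t : ℝ} (h : ∀ᵐ x ∂P0, |x| < t) : tailProb P0 t = 0 := by
  have : P0 {x | t ≤ |x|} = 0 := by
    rw [ae_iff] at h
    simpa using h
  simp [tailProb, this]

lemma integral_split_eq (hF : ∀ᵐ x ∂P0, x ∈ (F : Set ℝ)) (γ s t : ℝ) :
    ∫ x, (if |x| < t then s * x ^ 2 / 2 else 1 / γ) ∂P0
      = tailProb P0 t / γ + s * headSM P0 t / 2 := by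
  have hm : MeasurableSet {x : ℝ | t ≤ |x|} := measurableSet_le measurable_const measurable_norm
  have e : tailProb P0 t = ∫ x, {x : ℝ | t ≤ |x|}.indicator 1 x ∂P0 := by
    rw [integral_indicator_one hm]; rfl
  have e2 : tailProb P0 t / γ + s * headSM P0 t / 2
      = γ⁻¹ * tailProb P0 t + s / 2 * headSM P0 t := by ring
  rw [e2, e, headSM, ← integral_const_mul, ← integral_const_mul,
    ← integral_add (integrable_of_ae_mem_finset hF _) (integrable_of_ae_mem_finset hF _)]
  congr 1
  ext x
  by_cases h : |x| < t
  · simp [h, not_le.2 h]; ring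
  · simp [h, not_lt.1 h]

lemma limMI_le (hF : ∀ᵐ x ∂P0, x ∈ (F : Set ℝ)) (γ s t : ℝ) :
    limMI γ P0 s ≤ tailProb P0 t / γ + s * headSM P0 t / 2 := by
  rw [← integral_split_eq hF]
  refine integral_mono (integrable_of_ae_mem_finset hF _) (integrable_of_ae_mem_finset hF _)
    fun x => ?_
  dsimp only
  split_ifs
  exacts [min_le_left _ _, min_le_right _ _]

lemma limMI_eq (hF : ∀ᵐ x ∂P0, x ∈ (F : Set ℝ)) {γ s t : ℝ}
    (h1 : ∀ᵐ x ∂P0, |x| < t → s * x ^ 2 / 2 ≤ 1 / γ)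
    (h2 : ∀ᵐ x ∂P0, t ≤ |x| → 1 / γ ≤ s * x ^ 2 / 2) :
    limMI γ P0 s = tailProb P0 t / γ + s * headSM P0 t / 2 := by
  rw [← integral_split_eq hF]
  refine integral_congr_ae ?_
  filter_upwards [h1, h2] with x hx1 hx2
  split_ifs with h
  exacts [min_eq_left (hx1 h), min_eq_right (hx2 (not_lt.1 h))]

lemma limMI_le_inv (hF : ∀ᵐ x ∂P0, x ∈ (F : Set ℝ)) (γ s : ℝ) : limMI γ P0 s ≤ 1 / γ := by
  have := integral_mono (μ := P0)
    (integrable_of_ae_mem_finset hF fun x => min (s * x ^ 2 / 2) (1 / γ))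
    (integrable_const (1 / γ)) fun x => min_le_right _ _
  simpa [limMI] using this

/-- At the critical signal-to-noise ratio of the level `a`, the thresholds `a` and `b` give the
same value when no mass lies strictly between them. -/
lemma limMI_critical (hF : ∀ᵐ x ∂P0, x ∈ (F : Set ℝ)) {γ a b : ℝ} (hγ : 0 < γ) (ha : 0 < a)
    (hab : a < b) (hgap : ∀ᵐ x ∂P0, |x| < b → |x| ≤ a) :
    limMI γ P0 (2 / (γ * a ^ 2)) = tailProb P0 a / γ + 2 / (γ * a ^ 2) * headSM P0 a / 2 ∧
    limMI γ P0 (2 / (γ * a ^ 2)) = tailProb P0 b / γ + 2 / (γ * a ^ 2) * headSM P0 b / 2 := by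
  have e : ∀ x : ℝ, 2 / (γ * a ^ 2) * x ^ 2 / 2 = 1 / γ * (x ^ 2 / a ^ 2) := fun x => by
    field_simp
  have hle : ∀ x : ℝ, |x| ≤ a → 2 / (γ * a ^ 2) * x ^ 2 / 2 ≤ 1 / γ := fun x hx => by
    rw [e]
    refine mul_le_of_le_one_right (by positivity) ((div_le_one (by positivity)).2 ?_)
    rw [← sq_abs x]
    gcongr
  have hge : ∀ x : ℝ, a ≤ |x| → 1 / γ ≤ 2 / (γ * a ^ 2) * x ^ 2 / 2 := fun x hx => by
    rw [e]
    refine le_mul_of_one_le_right (by positivity) ((one_le_div (by positivity)).2 ?_)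
    rw [← sq_abs x]
    gcongr
  refine ⟨limMI_eq hF (ae_of_all _ fun x hx => hle x hx.le) (ae_of_all _ hge), limMI_eq hF ?_
    (ae_of_all _ fun x hx => hge x (hab.le.trans hx))⟩
  filter_upwards [hgap] with x hx hxb
  exact hle x (hx hxb)

end Thresholds

lemma exists_consecutive_between {f : ℕ → ℝ} {q : ℝ} {K : ℕ} (hK : 0 < K) (hl : f K ≤ q)
    (hu : q ≤ f 0) : ∃ k < K, f (k + 1) ≤ q ∧ q ≤ f k := by
  induction K, hK using Nat.le_induction with
  | base => exact ⟨0, one_pos, hl, hu⟩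
  | succ K hK ih =>
    by_cases h : q ≤ f K
    · exact ⟨K, K.lt_succ_self, hl, h⟩
    · obtain ⟨k, hk, h'⟩ := ih (not_le.1 h).le
      exact ⟨k, hk.trans K.lt_succ_self, h'⟩

/-- Value of the limiting potential at the threshold `t`. -/
def thresholdValue (Δ : ℝ) {kA : ℕ} (PA : Measure (Fin kA → ℝ)) (φ : ℝ → (Fin kA → ℝ) → ℝ)
    (P0 : Measure ℝ) (γ τ t : ℝ) : ℝ :=
  IPout Δ PA φ (truncSMge P0 t) (secondMoment P0) + tailProb P0 t / γ + τ * headSM P0 t / 2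

lemma tendsto_error_zero (γ s M C : ℝ) :
    Filter.Tendsto (fun ρ => (C + √(γ * |log ρ| * s) * M) / (γ * |log ρ|))
      (nhdsWithin 0 (Set.Ioi 0)) (nhds 0) := by
  have hL : Filter.Tendsto (fun ρ => |log ρ|) (nhdsWithin 0 (Set.Ioi 0)) Filter.atTop :=
    Filter.tendsto_abs_atBot_atTop.comp tendsto_log_nhdsGT_zero
  have h1 : Filter.Tendsto (fun L : ℝ => C / γ * L⁻¹ + √(γ * s) * M / γ * (√L)⁻¹)
      Filter.atTop (nhds 0) := by
    have a := (tendsto_inv_atTop_zero (𝕜 := ℝ)).const_mul (C / γ)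
    have b := (tendsto_inv_atTop_zero.comp tendsto_sqrt_atTop).const_mul (√(γ * s) * M / γ)
    simpa using a.add b
  refine (h1.comp hL).congr fun ρ => ?_
  have e : √(γ * |log ρ| * s) = √(γ * s) * √|log ρ| := by
    rw [mul_right_comm, sqrt_mul' _ (abs_nonneg _)]
  have e2 : (√|log ρ|)⁻¹ = √|log ρ| * |log ρ|⁻¹ := by
    rw [← div_eq_mul_inv, sqrt_div_self', one_div]
  simp only [Function.comp_apply]
  rw [e, e2, div_eq_mul_inv _ (γ * |log ρ|), mul_inv]
  ring

section Limit

variable {P0 : Measure ℝ} [IsProbabilityMeasure P0] {F : Finset ℝ} {kA : ℕ}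
  {PA : Measure (Fin kA → ℝ)} {φ : ℝ → (Fin kA → ℝ) → ℝ} {Δ γ τ : ℝ}

/-- Pairing the critical level `a` with concavity of the output information bounds the limiting
potential below by one of the two threshold values at `a` and `b`. -/
lemma min_thresholdValue_le (hF : ∀ᵐ x ∂P0, x ∈ (F : Set ℝ))
    (hconc : ConcaveOn ℝ (Set.Icc 0 (secondMoment P0)) fun q => IPout Δ PA φ q (secondMoment P0))
    (hγ : 0 < γ) {a b q : ℝ} (ha : 0 < a) (hab : a < b) (hgap : ∀ᵐ x ∂P0, |x| < b → |x| ≤ a)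
    (hq1 : truncSMge P0 b ≤ q) (hq2 : q ≤ truncSMge P0 a) :
    min (thresholdValue Δ PA φ P0 γ τ a) (thresholdValue Δ PA φ P0 γ τ b)
      ≤ limMI γ P0 (2 / (γ * a ^ 2)) + IPout Δ PA φ q (secondMoment P0)
        - (2 / (γ * a ^ 2) - τ) * (secondMoment P0 - q) / 2 := by
  obtain ⟨e1, e2⟩ := limMI_critical hF hγ ha hab hgap
  have hmem : ∀ t, truncSMge P0 t ∈ Set.Icc 0 (secondMoment P0) := fun t =>
    ⟨truncSMge_nonneg t, by
      linarith [truncSMge_add_headSM hF t, headSM_nonneg (P0 := P0) t]⟩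
  obtain ⟨l, m, hl, hm, hlm, hq⟩ : q ∈ segment ℝ (truncSMge P0 b) (truncSMge P0 a) := by
    rw [segment_eq_Icc (hq1.trans hq2)]
    exact ⟨hq1, hq2⟩
  have hc := hconc.2 (hmem b) (hmem a) hl hm hlm
  rw [hq] at hc
  simp only [smul_eq_mul] at hc hq
  have ea := truncSMge_add_headSM hF a
  have eb := truncSMge_add_headSM hF b
  have h1 := mul_le_mul_of_nonneg_left
    (min_le_left (thresholdValue Δ PA φ P0 γ τ a) (thresholdValue Δ PA φ P0 γ τ b)) hm
  have h2 := mul_le_mul_of_nonneg_left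
    (min_le_right (thresholdValue Δ PA φ P0 γ τ a) (thresholdValue Δ PA φ P0 γ τ b)) hl
  set mn := min (thresholdValue Δ PA φ P0 γ τ a) (thresholdValue Δ PA φ P0 γ τ b)
  set S := secondMoment P0
  have hm' : m = 1 - l := by linarith
  unfold thresholdValue at h1 h2
  set s := 2 / (γ * a ^ 2)
  have hS : S - q = m * headSM P0 a + l * headSM P0 b := by
    rw [← hq, hm']
    linear_combination (l - 1) * ea - l * eb
  have hg : limMI γ P0 s = m * (tailProb P0 a / γ + s * headSM P0 a / 2)
      + l * (tailProb P0 b / γ + s * headSM P0 b / 2) := by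
    rw [← e1, ← e2, hm']
    ring
  have hsum : mn = m * mn + l * mn := by rw [hm']; ring
  rw [hS, hg, hsum]
  linear_combination h1 + h2 + hc

theorem tendsto_iRSside_of_thresholds (hF : ∀ᵐ x ∂P0, x ∈ (F : Set ℝ)) {M : ℝ}
    (hM : ∀ x ∈ F, |x| ≤ M) (hM0 : 0 ≤ M)
    (hconc : ConcaveOn ℝ (Set.Icc 0 (secondMoment P0)) fun q => IPout Δ PA φ q (secondMoment P0))
    (hγ : 0 < γ) (hτ0 : 0 ≤ τ) {K : ℕ} (hK : 0 < K) {u : ℕ → ℝ} (hu0 : 0 < u 0)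
    (hu0le : ∀ k < K, u 0 ≤ u k) (hmono : ∀ k < K, u k < u (k + 1))
    (hbot : ∀ᵐ x ∂P0, u 0 ≤ |x|) (htop : ∀ᵐ x ∂P0, |x| < u K)
    (hgap : ∀ k < K, ∀ᵐ x ∂P0, |x| < u (k + 1) → |x| ≤ u k)
    (hτ : ∀ k < K, τ ≤ 2 / (γ * u k ^ 2)) :
    Filter.Tendsto
      (fun ρ : ℝ =>
        ⨅ q : Set.Icc (0 : ℝ) (secondMoment P0), ⨆ r : Set.Ici (0 : ℝ),
          iRSside Δ PA φ P0 (γ * ρ * |Real.log ρ|) ρ q r τ)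
      (nhdsWithin 0 (Set.Ioi 0))
      (nhds (⨅ k : Fin (K + 1), thresholdValue Δ PA φ P0 γ τ (u k))) := by
  obtain ⟨C, hC⟩ := IP0_rescaled_le hF hM hM0 hγ
  set m := ⨅ k : Fin (K + 1), thresholdValue Δ PA φ P0 γ τ (u k)
  have hm_le : ∀ k ≤ K, m ≤ thresholdValue Δ PA φ P0 γ τ (u k) := fun k hk =>
    ciInf_le (Set.finite_range _).bddBelow (⟨k, Nat.lt_succ_of_le hk⟩ : Fin (K + 1))
  obtain ⟨k0, hk0⟩ := exists_eq_ciInf_of_finite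
    (f := fun k : Fin (K + 1) => thresholdValue Δ PA φ P0 γ τ (u k))
  have hS0 : 0 ≤ secondMoment P0 := integral_nonneg fun x => sq_nonneg x
  set S := secondMoment P0
  set s0 := 2 / (γ * u 0 ^ 2)
  have hne : Nonempty (Set.Icc 0 S) := ⟨⟨0, le_rfl, hS0⟩⟩
  have hne2 : Nonempty (Set.Ici (0 : ℝ)) := ⟨⟨0, Set.self_mem_Ici⟩⟩
  have hr : ∀ r : Set.Ici (0 : ℝ), 0 ≤ (r : ℝ) := fun r => r.2
  have key : ∀ ρ, 0 < ρ → ρ ≤ 1 / 2 →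
      m - (log 2 + √(γ * |log ρ| * s0) * M) / (γ * |log ρ|)
        ≤ (⨅ q : Set.Icc (0 : ℝ) S, ⨆ r : Set.Ici (0 : ℝ),
          iRSside Δ PA φ P0 (γ * ρ * |Real.log ρ|) ρ q r τ) ∧
      (⨅ q : Set.Icc (0 : ℝ) S, ⨆ r : Set.Ici (0 : ℝ),
          iRSside Δ PA φ P0 (γ * ρ * |Real.log ρ|) ρ q r τ) ≤ m + C / |log ρ| := by
    intro ρ h0 h1
    have hL : 0 < |log ρ| := abs_pos.2 (log_neg h0 (by linarith)).ne
    have hbdd : ∀ q : Set.Icc (0 : ℝ) S, BddAbove (Set.range fun r : Set.Ici (0 : ℝ) =>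
        iRSside Δ PA φ P0 (γ * ρ * |Real.log ρ|) ρ q r τ) := by
      refine fun q => ⟨1 / γ + C / |log ρ| + IPout Δ PA φ q S, ?_⟩
      rintro _ ⟨r, rfl⟩
      have a1 := hC ρ h0 h1 (r + τ) (add_nonneg (hr r) hτ0)
      have a2 := limMI_le_inv hF γ (r + τ)
      have a3 := mul_nonneg (hr r) (sub_nonneg.2 q.2.2)
      dsimp only [iRSside]
      linarith
    have hlow : ∀ q : Set.Icc (0 : ℝ) S,
        m - (log 2 + √(γ * |log ρ| * s0) * M) / (γ * |log ρ|) ≤ ⨆ r : Set.Ici (0 : ℝ),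
          iRSside Δ PA φ P0 (γ * ρ * |Real.log ρ|) ρ q r τ := by
      intro q
      obtain ⟨k, hk, hq1, hq2⟩ := exists_consecutive_between (f := fun k => truncSMge P0 (u k))
        (q := q) hK (by simpa [truncSMge_eq_zero htop] using q.2.1) (by
          have := truncSMge_add_headSM hF (u 0)
          rw [headSM_eq_zero hbot, add_zero] at this
          simpa [this] using q.2.2)
      have huk : 0 < u k := hu0.trans_le (hu0le k hk)
      have hs : 2 / (γ * u k ^ 2) ≤ s0 := by
        have := hu0le k hk
        simp only [s0]
        gcongr
      refine le_trans ?_ (le_ciSup (hbdd q) ⟨2 / (γ * u k ^ 2) - τ, sub_nonneg.2 (hτ k hk)⟩)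
      have b1 := min_thresholdValue_le (τ := τ) hF hconc hγ huk (hmono k hk) (hgap k hk) hq1 hq2
      have b2 := (le_min (hm_le k hk.le) (hm_le (k + 1) hk)).trans b1
      have b3 := le_IP0_rescaled hF hM hM0 hγ h0 (by linarith)
        (show 0 ≤ 2 / (γ * u k ^ 2) by positivity)
      have b4 : (log 2 + √(γ * |log ρ| * (2 / (γ * u k ^ 2))) * M) / (γ * |log ρ|)
          ≤ (log 2 + √(γ * |log ρ| * s0) * M) / (γ * |log ρ|) := by gcongr
      simp only [iRSside, sub_add_cancel]
      linarith
    refine ⟨le_ciInf hlow, ?_⟩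
    have hqk := truncSMge_add_headSM hF (u k0)
    refine (ciInf_le ⟨_, Set.forall_mem_range.2 hlow⟩ ⟨truncSMge P0 (u k0), truncSMge_nonneg _, by
      linarith [headSM_nonneg (P0 := P0) (u k0)]⟩).trans (ciSup_le fun r => ?_)
    have a1 := hC ρ h0 h1 (r + τ) (add_nonneg (hr r) hτ0)
    have a2 := limMI_le hF γ (r + τ) (u k0)
    have e : m = _ := hk0.symm
    rw [e]
    dsimp only [iRSside, thresholdValue]
    have e2 : secondMoment P0 - truncSMge P0 (u k0) = headSM P0 (u k0) := by linarith
    rw [e2]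
    linear_combination a1 + a2
  have hnear : ∀ᶠ ρ : ℝ in nhdsWithin 0 (Set.Ioi 0), 0 < ρ ∧ ρ ≤ 1 / 2 := by
    filter_upwards [Ioc_mem_nhdsGT (show (0 : ℝ) < 1 / 2 by norm_num)] with ρ hρ using hρ
  have t1 := (tendsto_error_zero γ s0 M (log 2)).const_sub m
  have t2 := (tendsto_error_zero 1 0 0 C).const_add m
  rw [sub_zero] at t1
  rw [add_zero] at t2
  refine tendsto_of_tendsto_of_tendsto_of_le_of_le' t1 t2 ?_ ?_
  · filter_upwards [hnear] with ρ hρ using (key ρ hρ.1 hρ.2).1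
  · filter_upwards [hnear] with ρ hρ
    simpa using (key ρ hρ.1 hρ.2).2

end Limit

/-- Proposition 5 of the paper: the limit as ρ → 0⁺ of the
replica-symmetric variational problem with side information, for a discrete prior. -/
theorem limit_variational_problem_side_info
    (Δ : ℝ) (hΔ : 0 < Δ)
    (kA : ℕ) (PA : Measure (Fin kA → ℝ)) [IsProbabilityMeasure PA]
    (φ φ' φ'' : ℝ → (Fin kA → ℝ) → ℝ)
    -- (H2)
    (hφmeas : Measurable fun p : ℝ × (Fin kA → ℝ) => φ p.1 p.2)
    (hφbd : ∃ B, ∀ x a, |φ x a| ≤ B)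
    (hd1 : ∀ a x, HasDerivAt (fun t => φ t a) (φ' x a) x)
    (hd2 : ∀ a x, HasDerivAt (fun t => φ' t a) (φ'' x a) x)
    (hφ'bd : ∃ B, ∀ x a, |φ' x a| ≤ B)
    (hφ''bd : ∃ B, ∀ x a, |φ'' x a| ≤ B)
    (hφ'cont : ∀ a, Continuous fun x => φ' x a)
    (hφ''cont : ∀ a, Continuous fun x => φ'' x a)
    -- discrete prior with finite support, 0 < v 0 < ... < v (K-1)
    (K : ℕ) (hK : 0 < K) (v : Fin K → ℝ) (hvpos : 0 < v ⟨0, hK⟩) (hvmono : StrictMono v)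
    (P0 : Measure ℝ) [IsProbabilityMeasure P0]
    (hsupp : ∀ᵐ x ∂P0, ∃ k : Fin K, x = v k ∨ x = -(v k))
    (γ : ℝ) (hγ : 0 < γ)
    (τ : ℝ) (hτ0 : 0 ≤ τ)
    (hτ : τ < 2 / (γ * (v ⟨K - 1, by omega⟩) ^ 2)) :
    Filter.Tendsto
      (fun ρ : ℝ =>
        ⨅ q : Set.Icc (0 : ℝ) (secondMoment P0), ⨆ r : Set.Ici (0 : ℝ),
          iRSside Δ PA φ P0 (γ * ρ * |Real.log ρ|) ρ q r τ)
      (nhdsWithin 0 (Set.Ioi 0))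
      (nhds (⨅ k : Fin (K + 1),
        if h : (k : ℕ) < K then
          IPout Δ PA φ (truncSMge P0 (v ⟨k, h⟩)) (secondMoment P0)
            + tailProb P0 (v ⟨k, h⟩) / γ + τ * headSM P0 (v ⟨k, h⟩) / 2
        else IPout Δ PA φ 0 (secondMoment P0) + τ * secondMoment P0 / 2)) := by
  obtain ⟨B0, hB0⟩ := hφbd
  obtain ⟨B1, hB1⟩ := hφ'bd
  obtain ⟨B2, hB2⟩ := hφ''bd
  have H : RegularChannel φ φ' φ'' (max B0 (max B1 B2)) :=
    { meas := hφmeas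
      d1 := hd1
      d2 := hd2
      b0 := fun x a => (hB0 x a).trans (le_max_left _ _)
      b1 := fun x a => (hB1 x a).trans ((le_max_left _ _).trans (le_max_right _ _))
      b2 := fun x a => (hB2 x a).trans ((le_max_right _ _).trans (le_max_right _ _)) }
  have hconc := H.concaveOn_IPout (PA := PA) hΔ (secondMoment P0)
  have hv : ∀ k, 0 < v k := fun k =>
    hvpos.trans_le (hvmono.monotone (Fin.mk_le_of_le_val (Nat.zero_le _)))
  set last : Fin K := ⟨K - 1, by omega⟩
  have hlast : ∀ k, v k ≤ v last := fun k =>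
    hvmono.monotone (Fin.le_def.2 (Nat.le_sub_one_of_lt k.2))
  have habs : ∀ᵐ x ∂P0, ∃ k : Fin K, |x| = v k := by
    filter_upwards [hsupp] with x hx
    obtain ⟨k, rfl | rfl⟩ := hx
    · exact ⟨k, abs_of_pos (hv k)⟩
    · exact ⟨k, by rw [abs_neg, abs_of_pos (hv k)]⟩
  classical
  set F : Finset ℝ := Finset.univ.image v ∪ Finset.univ.image fun k => -v k
  have hF : ∀ᵐ x ∂P0, x ∈ (F : Set ℝ) := by
    filter_upwards [hsupp] with x hx
    obtain ⟨k, rfl | rfl⟩ := hx <;> simp [F]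
  have hM : ∀ x ∈ F, |x| ≤ v last := by
    intro x hx
    simp only [F, Finset.mem_union, Finset.mem_image, Finset.mem_univ, true_and] at hx
    obtain ⟨k, rfl⟩ | ⟨k, rfl⟩ := hx
    · rw [abs_of_pos (hv k)]
      exact hlast k
    · rw [abs_neg, abs_of_pos (hv k)]
      exact hlast k
  set u : ℕ → ℝ := fun k => if h : k < K then v ⟨k, h⟩ else v last + 1
  have hu : ∀ k (h : k < K), u k = v ⟨k, h⟩ := fun k h => dif_pos h
  have huK : u K = v last + 1 := dif_neg (lt_irrefl K)
  have htop : ∀ᵐ x ∂P0, |x| < u K := by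
    filter_upwards [hF] with x hx
    linarith [hM x hx]
  have key := tendsto_iRSside_of_thresholds (u := u) hF hM (hv last).le hconc hγ hτ0 hK
    (by rw [hu 0 hK]; exact hvpos)
    (fun k hk => by
      rw [hu 0 hK, hu k hk]
      exact hvmono.monotone (Fin.mk_le_of_le_val (Nat.zero_le _)))
    (fun k hk => by
      rw [hu k hk]
      rcases Nat.lt_or_ge (k + 1) K with h | h
      · rw [hu _ h]
        exact hvmono (Fin.mk_lt_mk.2 k.lt_succ_self)
      · rw [le_antisymm hk h, huK]
        linarith [hlast ⟨k, hk⟩])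
    (by
      filter_upwards [habs] with x hx
      obtain ⟨k, hk⟩ := hx
      rw [hu 0 hK, hk]
      exact hvmono.monotone (Fin.mk_le_of_le_val (Nat.zero_le _)))
    htop
    (fun k hk => by
      filter_upwards [habs] with x hx hlt
      obtain ⟨j, hj⟩ := hx
      rw [hu k hk, hj]
      rcases Nat.lt_or_ge (k + 1) K with h | h
      · rw [hu _ h, hj, hvmono.lt_iff_lt, Fin.lt_def] at hlt
        exact hvmono.monotone (Fin.le_def.2 (Nat.lt_succ_iff.1 hlt))
      · exact hvmono.monotone (Fin.le_def.2 (by have := j.2; dsimp only; omega)))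
    (fun k hk => by
      rw [hu k hk]
      have h1 := hv ⟨k, hk⟩
      have h2 := hlast ⟨k, hk⟩
      refine hτ.le.trans ?_
      gcongr)
  convert key using 4 with k
  split_ifs with h
  · rw [thresholdValue, hu _ h]
  · have hk : (k : ℕ) = K := by have := k.2; omega
    have h1 := truncSMge_eq_zero htop
    have h2 := truncSMge_add_headSM hF (u K)
    rw [h1, zero_add] at h2
    rw [thresholdValue, hk, h1, h2, tailProb_eq_zero htop, zero_div, add_zero]

end GLM
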